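/- (Theorem "becominggraphthm", graphical case E = ∅: interior smoothing estimates for graphs starting in a thin slab.) Let n ≥ 1. There exist constants C > 1 and σ₀ ∈ (0,1), depending only on n, and for every L ≥ 1 there exist Λ₀ > 1 and λ₀ ∈ (0,1) such that the following holds. Let λ ∈ (0,λ₀], ρ > 0, t₁ ∈ ℝ, set t₀ := t₁ + Λ₀λ²ρ², let t₂ > t₀, â ∈ ℝⁿ, ã ∈ ℝ, and let f : [t₁,t₂) × Bⁿ(â,2ρ) → ℝ be a graphical mean curvature flow with |f(t,x) − ã| < 2ρ for all (t,x). Suppose sup_{Bⁿ(â,2ρ)} |f(t₁,·) − ã| ≤ λ^{2n}ρ and sup_{Bⁿ(â,2ρ)} |Df(t₁,·)| ≤ L. Then for all t ∈ [t₀, t₀+σ₀ρ²) with t < t₂ and all x ∈ Bⁿ(â,ρ): |f(t,x) − ã| ≤ Cρ⁻¹(t−t₁), |Df(t,x)| ≤ C(ρ⁻²(t−t₁))^{1/4}, and |D²f(t,x)| ≤ C(t−t₁)^{−1/2}, where |D²f| denotes the Frobenius norm of the spatial Hessian. -/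

import Mathlib

open Metric Set MeasureTheory

/-- Partial derivative `∂ᵢ g (x)`. -/
noncomputable def pd {n : ℕ} (g : EuclideanSpace ℝ (Fin n) → ℝ) (x : EuclideanSpace ℝ (Fin n))
    (i : Fin n) : ℝ :=
  fderiv ℝ g x (EuclideanSpace.single i 1)

/-- Second partial derivative `∂ᵢ∂ⱼ g (x)`. -/
noncomputable def pd2 {n : ℕ} (g : EuclideanSpace ℝ (Fin n) → ℝ) (x : EuclideanSpace ℝ (Fin n))
    (i j : Fin n) : ℝ :=
  fderiv ℝ (fun y => pd g y j) x (EuclideanSpace.single i 1)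

/-- Squared Euclidean norm `|Dg(x)|²` of the spatial gradient. -/
noncomputable def gradNormSq {n : ℕ} (g : EuclideanSpace ℝ (Fin n) → ℝ)
    (x : EuclideanSpace ℝ (Fin n)) : ℝ :=
  ∑ i, (pd g x i) ^ 2

/-- Euclidean norm `|Dg(x)|` of the spatial gradient. -/
noncomputable def gradNorm {n : ℕ} (g : EuclideanSpace ℝ (Fin n) → ℝ)
    (x : EuclideanSpace ℝ (Fin n)) : ℝ :=
  Real.sqrt (gradNormSq g x)

/-- Frobenius norm `|D²g(x)|` of the spatial Hessian. -/
noncomputable def hessNorm {n : ℕ} (g : EuclideanSpace ℝ (Fin n) → ℝ)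
    (x : EuclideanSpace ℝ (Fin n)) : ℝ :=
  Real.sqrt (∑ i, ∑ j, (pd2 g x i j) ^ 2)

/-- Right-hand side of the graphical mean curvature flow equation:
`∑ᵢⱼ (δᵢⱼ − ∂ᵢg ∂ⱼg / (1+|Dg|²)) ∂ᵢ∂ⱼ g`. -/
noncomputable def mcfRHS {n : ℕ} (g : EuclideanSpace ℝ (Fin n) → ℝ)
    (x : EuclideanSpace ℝ (Fin n)) : ℝ :=
  ∑ i, ∑ j,
    ((if i = j then (1 : ℝ) else 0) - pd g x i * pd g x j / (1 + gradNormSq g x)) * pd2 g x i j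

/-- `f` is a (smooth) graphical mean curvature flow on `I × U`. -/
def IsGMCF {n : ℕ} (I : Set ℝ) (U : Set (EuclideanSpace ℝ (Fin n)))
    (f : ℝ → EuclideanSpace ℝ (Fin n) → ℝ) : Prop :=
  ContDiffOn ℝ (⊤ : ℕ∞) (fun p : ℝ × EuclideanSpace ℝ (Fin n) => f p.1 p.2) (I ×ˢ U) ∧
  ∀ t ∈ I, ∀ x ∈ U, deriv (fun s => f s x) t = mcfRHS (f t) x

/-- Squared norm `|A|²(g,x)` of the second fundamental form of the graph of `g`
at `(x, g(x))`. -/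
noncomputable def secondFF2 {n : ℕ} (g : EuclideanSpace ℝ (Fin n) → ℝ)
    (x : EuclideanSpace ℝ (Fin n)) : ℝ :=
  ∑ i, ∑ j, ∑ k, ∑ l,
    ((if i = k then (1 : ℝ) else 0) - pd g x i * pd g x k / (1 + gradNormSq g x)) *
      ((if j = l then (1 : ℝ) else 0) - pd g x j * pd g x l / (1 + gradNormSq g x)) *
      (pd2 g x i j / Real.sqrt (1 + gradNormSq g x)) *
      (pd2 g x k l / Real.sqrt (1 + gradNormSq g x))

/-!
Write `u = f - ã`, and let `aᵢⱼ` be the coefficients `δᵢⱼ - ∂ᵢu ∂ⱼu / (1 + |Du|²)` of the flow.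
All estimates come from the maximum principle for `aᵢⱼ∂ᵢ∂ⱼ - ∂ₜ` on cylinders of radius `ρ / 8`,
localized by the paraboloid `R² - |x - x₀|²`; since `0 ≤ a ≤ 1`, the errors of the cutoff depend
only on `n`.

Comparing `±u` with a paraboloid shows that `|u|` grows at most linearly in `t - t₁`. While
`|Du|` is bounded, `u²` is a strict subsolution with gain comparable to `|Du|²`, and this turns
the height bound into a decay estimate `|Du|² ≤ C (t - t₁) / ρ²`. The a priori bound on `|Du|`
comes from the supersolution `(1 + |Du|²)^(-1/2)`, which preserves gradient bounds up to a factor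
for a time `~ ρ²`. The first decay estimate depends on `L`, but makes `|Du| ≤ 1` at some early
time; persistence from that time on and a second decay estimate remove the dependence on `L`.
Once `|Du|` is small, `|D²u|² (δ + |Du|²)` satisfies a Riccati inequality, and this gives
`|D²u|² ≤ C / (t - t₁)`.
-/

open scoped ContDiff Topology Matrix

section PosSemidefForms

variable {ι κ : Type*} [Fintype ι] [Fintype κ] {a : Matrix ι ι ℝ}

theorem trace_mul_vecMulVec (a : Matrix ι ι ℝ) (ξ ζ : ι → ℝ) :
    (a * Matrix.vecMulVec ξ ζ).trace = ζ ⬝ᵥ a *ᵥ ξ := by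
  rw [Matrix.mul_vecMulVec, Matrix.trace_vecMulVec, dotProduct_comm]

theorem dotProduct_mulVec_comm (ha : a.PosSemidef) (ξ ζ : ι → ℝ) :
    ξ ⬝ᵥ a *ᵥ ζ = ζ ⬝ᵥ a *ᵥ ξ := by
  have hsymm : aᵀ = a := ha.isHermitian
  rw [Matrix.dotProduct_mulVec, ← Matrix.mulVec_transpose, hsymm, dotProduct_comm]

theorem dotProduct_mulVec_self_nonneg (ha : a.PosSemidef) (ξ : ι → ℝ) : 0 ≤ ξ ⬝ᵥ a *ᵥ ξ :=
  ha.dotProduct_mulVec_nonneg ξ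

open scoped MatrixOrder Matrix.Norms.L2Operator in
theorem exists_eq_transpose_mul_self (ha : a.PosSemidef) : ∃ b : Matrix ι ι ℝ, a = bᵀ * b := by
  classical
  exact CStarAlgebra.nonneg_iff_eq_star_mul_self.mp ha.nonneg

theorem trace_mul_nonneg {b : Matrix ι ι ℝ} (ha : a.PosSemidef) (hb : b.PosSemidef) :
    0 ≤ (a * b).trace := by
  obtain ⟨c, rfl⟩ := exists_eq_transpose_mul_self ha
  rw [Matrix.mul_assoc, Matrix.trace_mul_comm]
  exact (hb.mul_mul_conjTranspose_same c).trace_nonneg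

theorem dotProduct_mulVec_sum_le (ha : a.PosSemidef) (c : κ → ℝ) (ξ : κ → ι → ℝ) :
    (∑ k, c k • ξ k) ⬝ᵥ a *ᵥ (∑ k, c k • ξ k) ≤ (∑ k, c k ^ 2) * ∑ k, ξ k ⬝ᵥ a *ᵥ ξ k := by
  obtain ⟨b, rfl⟩ := exists_eq_transpose_mul_self ha
  have hform (η : ι → ℝ) : η ⬝ᵥ (bᵀ * b) *ᵥ η = ∑ i, (b *ᵥ η) i ^ 2 := by
    rw [← Matrix.mulVec_mulVec, Matrix.dotProduct_mulVec, Matrix.vecMul_transpose]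
    simp only [dotProduct, sq]
  have hlinear (i : ι) : (b *ᵥ ∑ k, c k • ξ k) i = ∑ k, c k * (b *ᵥ ξ k) i := by
    simp [Matrix.mulVec_sum, Matrix.mulVec_smul]
  calc _ = ∑ i, (∑ k, c k * (b *ᵥ ξ k) i) ^ 2 := by simp only [hform, hlinear]
    _ ≤ ∑ i, (∑ k, c k ^ 2) * ∑ k, (b *ᵥ ξ k) i ^ 2 :=
      Finset.sum_le_sum fun i _ => Finset.sum_mul_sq_le_sq_mul_sq _ _ _
    _ = _ := by simp only [hform, ← Finset.mul_sum]; rw [Finset.sum_comm]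

variable [DecidableEq ι]

/-- The symmetric coefficient matrices `a` with `0 ≤ a ≤ 1`. -/
structure IsSubunit (a : Matrix ι ι ℝ) : Prop where
  posSemidef : a.PosSemidef
  one_sub_posSemidef : (1 - a).PosSemidef

theorem IsSubunit.dotProduct_mulVec_self_le (ha : IsSubunit a) (ξ : ι → ℝ) :
    ξ ⬝ᵥ a *ᵥ ξ ≤ ξ ⬝ᵥ ξ := by
  have h := dotProduct_mulVec_self_nonneg ha.one_sub_posSemidef ξ
  rw [Matrix.sub_mulVec, Matrix.one_mulVec, dotProduct_sub] at h
  linarith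

theorem IsSubunit.trace_le (ha : IsSubunit a) : a.trace ≤ Fintype.card ι := by
  have h := ha.one_sub_posSemidef.trace_nonneg
  rw [Matrix.trace_sub, Matrix.trace_one] at h
  linarith

end PosSemidefForms

section DirectionalDerivative

variable {E : Type*} [NormedAddCommGroup E] [NormedSpace ℝ E] {G H : E → ℝ} {p : E}

/-- The derivative of a scalar function in a fixed direction `v`, as a function of the point, so
that it can be iterated. -/
noncomputable def dirDeriv (v : E) (G : E → ℝ) (p : E) : ℝ :=
  fderiv ℝ G p v

@[fun_prop]
theorem contDiffAt_dirDeriv (hG : ContDiffAt ℝ ∞ G p) (v : E) :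
    ContDiffAt ℝ ∞ (dirDeriv v G) p :=
  (hG.fderiv_right (m := ∞) (by simp)).clm_apply contDiffAt_const

@[fun_prop]
theorem differentiableAt_of_contDiffAt_infty (hG : ContDiffAt ℝ ∞ G p) : DifferentiableAt ℝ G p :=
  hG.differentiableAt (by simp)

theorem eventually_differentiableAt (hG : ContDiffAt ℝ ∞ G p) :
    ∀ᶠ q in 𝓝 p, DifferentiableAt ℝ G q :=
  ((hG.of_le (m := 1) (by simp)).eventually (by simp)).mono fun _ h =>
    h.differentiableAt one_ne_zero

theorem dirDeriv_congr (h : G =ᶠ[𝓝 p] H) (v : E) : dirDeriv v G p = dirDeriv v H p := by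
  simp only [dirDeriv, h.fderiv_eq]

theorem dirDeriv_const (c : ℝ) (v : E) : dirDeriv v (fun _ => c) p = 0 := by
  simp [dirDeriv]

theorem dirDeriv_add (hG : DifferentiableAt ℝ G p) (hH : DifferentiableAt ℝ H p) (v : E) :
    dirDeriv v (fun q => G q + H q) p = dirDeriv v G p + dirDeriv v H p := by
  simp [dirDeriv, fderiv_fun_add hG hH]

theorem dirDeriv_sub (hG : DifferentiableAt ℝ G p) (hH : DifferentiableAt ℝ H p) (v : E) :
    dirDeriv v (fun q => G q - H q) p = dirDeriv v G p - dirDeriv v H p := by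
  simp [dirDeriv, fderiv_fun_sub hG hH]

theorem dirDeriv_mul (hG : DifferentiableAt ℝ G p) (hH : DifferentiableAt ℝ H p) (v : E) :
    dirDeriv v (fun q => G q * H q) p = dirDeriv v G p * H p + G p * dirDeriv v H p := by
  simp [dirDeriv, fderiv_fun_mul hG hH]
  ring

theorem dirDeriv_sum {ι : Type*} [Fintype ι] {F : ι → E → ℝ}
    (hF : ∀ i, DifferentiableAt ℝ (F i) p) (v : E) :
    dirDeriv v (fun q => ∑ i, F i q) p = ∑ i, dirDeriv v (F i) p := by
  simp [dirDeriv, fderiv_fun_sum fun i _ => hF i]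

theorem dirDeriv_comp {φ : ℝ → ℝ} (hφ : DifferentiableAt ℝ φ (G p))
    (hG : DifferentiableAt ℝ G p) (v : E) :
    dirDeriv v (fun q => φ (G q)) p = deriv φ (G p) * dirDeriv v G p := by
  have h := (hφ.hasDerivAt.comp_hasFDerivAt p hG.hasFDerivAt).fderiv
  simp [dirDeriv, show (fun q => φ (G q)) = φ ∘ G from rfl, h]

theorem dirDeriv_dirDeriv_add (hG : ContDiffAt ℝ ∞ G p) (hH : ContDiffAt ℝ ∞ H p) (v w : E) :
    dirDeriv v (dirDeriv w fun q => G q + H q) p =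
      dirDeriv v (dirDeriv w G) p + dirDeriv v (dirDeriv w H) p := by
  have hfirst : (dirDeriv w fun q => G q + H q) =ᶠ[𝓝 p]
      fun q => dirDeriv w G q + dirDeriv w H q := by
    filter_upwards [eventually_differentiableAt hG, eventually_differentiableAt hH]
      with q hGq hHq using dirDeriv_add hGq hHq w
  rw [dirDeriv_congr hfirst, dirDeriv_add (by fun_prop) (by fun_prop)]

theorem dirDeriv_dirDeriv_mul (hG : ContDiffAt ℝ ∞ G p) (hH : ContDiffAt ℝ ∞ H p) (v w : E) :
    dirDeriv v (dirDeriv w fun q => G q * H q) p =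
      dirDeriv v (dirDeriv w G) p * H p + G p * dirDeriv v (dirDeriv w H) p +
        (dirDeriv v G p * dirDeriv w H p + dirDeriv w G p * dirDeriv v H p) := by
  have hfirst : (dirDeriv w fun q => G q * H q) =ᶠ[𝓝 p]
      fun q => dirDeriv w G q * H q + G q * dirDeriv w H q := by
    filter_upwards [eventually_differentiableAt hG, eventually_differentiableAt hH]
      with q hGq hHq using dirDeriv_mul hGq hHq w
  rw [dirDeriv_congr hfirst]
  simp (disch := fun_prop) only [dirDeriv_add, dirDeriv_mul]
  ring

theorem dirDeriv_dirDeriv_sum {ι : Type*} [Fintype ι] {F : ι → E → ℝ}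
    (hF : ∀ i, ContDiffAt ℝ ∞ (F i) p) (v w : E) :
    dirDeriv v (dirDeriv w fun q => ∑ i, F i q) p = ∑ i, dirDeriv v (dirDeriv w (F i)) p := by
  have hfirst : (dirDeriv w fun q => ∑ i, F i q) =ᶠ[𝓝 p] fun q => ∑ i, dirDeriv w (F i) q := by
    filter_upwards [Filter.eventually_all.2 fun i => eventually_differentiableAt (hF i)]
      with q hFq using dirDeriv_sum hFq w
  rw [dirDeriv_congr hfirst, dirDeriv_sum (by fun_prop)]

theorem dirDeriv_dirDeriv_comp {φ : ℝ → ℝ} (hφ : ContDiffAt ℝ ∞ φ (G p))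
    (hG : ContDiffAt ℝ ∞ G p) (v w : E) :
    dirDeriv v (dirDeriv w fun q => φ (G q)) p = deriv φ (G p) * dirDeriv v (dirDeriv w G) p +
      deriv (deriv φ) (G p) * (dirDeriv v G p * dirDeriv w G p) := by
  have hfirst : (dirDeriv w fun q => φ (G q)) =ᶠ[𝓝 p]
      fun q => deriv φ (G q) * dirDeriv w G q := by
    filter_upwards [hG.continuousAt.eventually (eventually_differentiableAt hφ),
      eventually_differentiableAt hG] with q hφq hGq using dirDeriv_comp hφq hGq w
  have hφ' : DifferentiableAt ℝ (deriv φ) (G p) :=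
    (contDiffAt_dirDeriv hφ (1 : ℝ)).differentiableAt (by simp)
  have hφG : DifferentiableAt ℝ (fun q => deriv φ (G q)) p := hφ'.comp p (by fun_prop)
  rw [dirDeriv_congr hfirst, dirDeriv_mul hφG (by fun_prop), dirDeriv_comp hφ' (by fun_prop)]
  ring

theorem eventually_dirDeriv_comm (hG : ContDiffAt ℝ ∞ G p) (v w : E) :
    dirDeriv v (dirDeriv w G) =ᶠ[𝓝 p] dirDeriv w (dirDeriv v G) := by
  have hG2 : ContDiffAt ℝ 2 G p := hG.of_le (WithTop.coe_le_coe.2 (le_top : (2 : ℕ∞) ≤ ⊤))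
  filter_upwards [hG2.eventually (by simp)] with q hq
  have hsymm : IsSymmSndFDerivAt ℝ G q := hq.isSymmSndFDerivAt (by simp)
  have hdiff : DifferentiableAt ℝ (fderiv ℝ G) q :=
    (hq.fderiv_right (m := 1) (by norm_num)).differentiableAt one_ne_zero
  have hiterated (v w : E) : dirDeriv v (dirDeriv w G) q = fderiv ℝ (fderiv ℝ G) q v w := by
    change fderiv ℝ (fun q => fderiv ℝ G q w) q v = _
    simp [fderiv_clm_apply hdiff (differentiableAt_const w)]
  rw [hiterated, hiterated, hsymm v w]

theorem dirDeriv_comm (hG : ContDiffAt ℝ ∞ G p) (v w : E) :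
    dirDeriv v (dirDeriv w G) p = dirDeriv w (dirDeriv v G) p :=
  (eventually_dirDeriv_comm hG v w).self_of_nhds

theorem deriv_comp_line (v : E) {r : ℝ} (hG : DifferentiableAt ℝ G (p + r • v)) :
    deriv (fun r : ℝ => G (p + r • v)) r = dirDeriv v G (p + r • v) := by
  have hline : HasDerivAt (fun r : ℝ => p + r • v) v r := by
    simpa using ((hasDerivAt_id r).smul_const v).const_add p
  exact (hG.hasFDerivAt.comp_hasDerivAt r hline).deriv

end DirectionalDerivative

/-- Space-time, with the time coordinate first. -/
abbrev SpaceTime (n : ℕ) :=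
  ℝ × EuclideanSpace ℝ (Fin n)

/-- The unit vector of `SpaceTime n` in the `i`-th spatial direction. -/
noncomputable def spaceUnit {n : ℕ} (i : Fin n) : SpaceTime n :=
  (0, EuclideanSpace.single i 1)

/-- The unit vector of `SpaceTime n` in the direction of time. -/
def timeUnit {n : ℕ} : SpaceTime n :=
  (1, 0)

local notation "∂[" i "]" => dirDeriv (spaceUnit i)

local notation "∂ₜ" => dirDeriv timeUnit

/-- The spatial gradient. It is a plain vector of partial derivatives, as a factor of matrix
products. -/
noncomputable def spatialGrad {n : ℕ} (G : SpaceTime n → ℝ) (p : SpaceTime n) : Fin n → ℝ :=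
  fun i => ∂[i] G p

/-- The spatial Hessian matrix. -/
noncomputable def hessian {n : ℕ} (G : SpaceTime n → ℝ) (p : SpaceTime n) :
    Matrix (Fin n) (Fin n) ℝ :=
  Matrix.of fun i j => ∂[i] (∂[j] G) p

/-- The operator `aᵢⱼ∂ᵢ∂ⱼ - ∂ₜ` with coefficient matrix `a`, evaluated at one point. -/
noncomputable def parabolicOp {n : ℕ} (a : Matrix (Fin n) (Fin n) ℝ) (G : SpaceTime n → ℝ)
    (p : SpaceTime n) : ℝ :=
  (a * hessian G p).trace - ∂ₜ G p

section ParabolicOperator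

variable {n : ℕ} {G H : SpaceTime n → ℝ} {p : SpaceTime n} {a : Matrix (Fin n) (Fin n) ℝ}

theorem spatialGrad_mul (hG : DifferentiableAt ℝ G p) (hH : DifferentiableAt ℝ H p) :
    spatialGrad (fun q => G q * H q) p = H p • spatialGrad G p + G p • spatialGrad H p := by
  ext i
  simp [spatialGrad, dirDeriv_mul hG hH, mul_comm]

theorem spatialGrad_sum {ι : Type*} [Fintype ι] {F : ι → SpaceTime n → ℝ}
    (hF : ∀ k, DifferentiableAt ℝ (F k) p) :
    spatialGrad (fun q => ∑ k, F k q) p = ∑ k, spatialGrad (F k) p := by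
  ext i
  simp [spatialGrad, dirDeriv_sum hF]

theorem spatialGrad_comp {φ : ℝ → ℝ} (hφ : DifferentiableAt ℝ φ (G p))
    (hG : DifferentiableAt ℝ G p) :
    spatialGrad (fun q => φ (G q)) p = deriv φ (G p) • spatialGrad G p :=
  funext fun i => dirDeriv_comp hφ hG (spaceUnit i)

theorem parabolicOp_const (c : ℝ) : parabolicOp a (fun _ => c) p = 0 := by
  have hfirst (v : SpaceTime n) : (dirDeriv v fun _ => c) = fun _ => 0 :=
    funext fun _ => dirDeriv_const c v
  simp [parabolicOp, hessian, hfirst, dirDeriv_const, Matrix.trace, Matrix.mul_apply]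

theorem parabolicOp_add (hG : ContDiffAt ℝ ∞ G p) (hH : ContDiffAt ℝ ∞ H p) :
    parabolicOp a (fun q => G q + H q) p = parabolicOp a G p + parabolicOp a H p := by
  have hhess : hessian (fun q => G q + H q) p = hessian G p + hessian H p :=
    Matrix.ext fun i j => dirDeriv_dirDeriv_add hG hH (spaceUnit i) (spaceUnit j)
  rw [parabolicOp, hhess, dirDeriv_add (by fun_prop) (by fun_prop), Matrix.mul_add,
    Matrix.trace_add, parabolicOp, parabolicOp]
  ring

theorem parabolicOp_sum {ι : Type*} [Fintype ι] {F : ι → SpaceTime n → ℝ}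
    (hF : ∀ k, ContDiffAt ℝ ∞ (F k) p) :
    parabolicOp a (fun q => ∑ k, F k q) p = ∑ k, parabolicOp a (F k) p := by
  have hhess : hessian (fun q => ∑ k, F k q) p = ∑ k, hessian (F k) p := by
    ext i j
    simp [hessian, dirDeriv_dirDeriv_sum hF, Matrix.sum_apply]
  simp only [parabolicOp]
  rw [hhess, dirDeriv_sum (by fun_prop), Finset.mul_sum, Matrix.trace_sum,
    Finset.sum_sub_distrib]

theorem parabolicOp_mul (ha : a.PosSemidef) (hG : ContDiffAt ℝ ∞ G p)
    (hH : ContDiffAt ℝ ∞ H p) :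
    parabolicOp a (fun q => G q * H q) p = parabolicOp a G p * H p + G p * parabolicOp a H p +
      2 * (spatialGrad G p ⬝ᵥ a *ᵥ spatialGrad H p) := by
  have hhess : hessian (fun q => G q * H q) p = H p • hessian G p + G p • hessian H p +
      (Matrix.vecMulVec (spatialGrad G p) (spatialGrad H p) +
        Matrix.vecMulVec (spatialGrad H p) (spatialGrad G p)) := by
    ext i j
    simp [hessian, spatialGrad, dirDeriv_dirDeriv_mul hG hH, Matrix.vecMulVec_apply]
    ring
  rw [parabolicOp, hhess, dirDeriv_mul (by fun_prop) (by fun_prop)]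
  simp only [Matrix.mul_add, Matrix.mul_smul, Matrix.trace_add, Matrix.trace_smul, smul_eq_mul,
    trace_mul_vecMulVec, dotProduct_mulVec_comm ha (spatialGrad H p), parabolicOp]
  ring

theorem parabolicOp_comp {φ : ℝ → ℝ} (hφ : ContDiffAt ℝ ∞ φ (G p)) (hG : ContDiffAt ℝ ∞ G p) :
    parabolicOp a (fun q => φ (G q)) p = deriv φ (G p) * parabolicOp a G p +
      deriv (deriv φ) (G p) * (spatialGrad G p ⬝ᵥ a *ᵥ spatialGrad G p) := by
  have hhess : hessian (fun q => φ (G q)) p = deriv φ (G p) • hessian G p +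
      deriv (deriv φ) (G p) • Matrix.vecMulVec (spatialGrad G p) (spatialGrad G p) :=
    Matrix.ext fun i j => dirDeriv_dirDeriv_comp hφ hG (spaceUnit i) (spaceUnit j)
  rw [parabolicOp, hhess, dirDeriv_comp (by fun_prop) (by fun_prop)]
  simp only [Matrix.mul_add, Matrix.mul_smul, Matrix.trace_add, Matrix.trace_smul, smul_eq_mul,
    trace_mul_vecMulVec, parabolicOp]
  ring

theorem parabolicOp_const_mul (c : ℝ) (hG : ContDiffAt ℝ ∞ G p) :
    parabolicOp a (fun q => c * G q) p = c * parabolicOp a G p := by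
  simp [parabolicOp_comp (φ := fun x => c * x) (by fun_prop) hG]

theorem spatialGrad_sq (hG : ContDiffAt ℝ ∞ G p) :
    spatialGrad (fun q => G q ^ 2) p = (2 * G p) • spatialGrad G p := by
  simp [spatialGrad_comp (φ := fun x => x ^ 2) (by fun_prop)
    (differentiableAt_of_contDiffAt_infty hG)]

theorem parabolicOp_sq (hG : ContDiffAt ℝ ∞ G p) :
    parabolicOp a (fun q => G q ^ 2) p =
      2 * G p * parabolicOp a G p + 2 * (spatialGrad G p ⬝ᵥ a *ᵥ spatialGrad G p) := by
  have hderiv : deriv (fun x : ℝ => x ^ 2) = fun x => 2 * x := by ext; simp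
  simp [parabolicOp_comp (φ := fun x => x ^ 2) (by fun_prop) hG, hderiv]

/-- The total energy `∑ₖ ⟨a Dvₖ, Dvₖ⟩` of the spatial gradients of a finite family of functions. -/
noncomputable def gradEnergy {κ : Type*} [Fintype κ] (a : Matrix (Fin n) (Fin n) ℝ)
    (v : κ → SpaceTime n → ℝ) (p : SpaceTime n) : ℝ :=
  ∑ k, spatialGrad (v k) p ⬝ᵥ a *ᵥ spatialGrad (v k) p

section SumSq

variable {κ : Type*} [Fintype κ] {v : κ → SpaceTime n → ℝ}

theorem gradEnergy_nonneg (ha : a.PosSemidef) : 0 ≤ gradEnergy a v p :=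
  Finset.sum_nonneg fun _ _ => dotProduct_mulVec_self_nonneg ha _

theorem spatialGrad_sum_sq (hv : ∀ k, ContDiffAt ℝ ∞ (v k) p) :
    spatialGrad (fun q => ∑ k, v k q ^ 2) p = ∑ k, (2 * v k p) • spatialGrad (v k) p := by
  rw [spatialGrad_sum (by fun_prop)]
  exact Finset.sum_congr rfl fun k _ => spatialGrad_sq (hv k)

theorem parabolicOp_sum_sq (hv : ∀ k, ContDiffAt ℝ ∞ (v k) p) :
    parabolicOp a (fun q => ∑ k, v k q ^ 2) p =
      2 * ∑ k, v k p * parabolicOp a (v k) p + 2 * gradEnergy a v p := by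
  rw [parabolicOp_sum (by fun_prop), gradEnergy, Finset.mul_sum, Finset.mul_sum,
    ← Finset.sum_add_distrib]
  refine Finset.sum_congr rfl fun k _ => ?_
  rw [parabolicOp_sq (hv k)]
  ring

theorem spatialGrad_sum_sq_form_le (ha : a.PosSemidef) (hv : ∀ k, ContDiffAt ℝ ∞ (v k) p) :
    spatialGrad (fun q => ∑ k, v k q ^ 2) p ⬝ᵥ a *ᵥ spatialGrad (fun q => ∑ k, v k q ^ 2) p ≤
      4 * (∑ k, v k p ^ 2) * gradEnergy a v p := by
  rw [spatialGrad_sum_sq hv]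
  refine (dotProduct_mulVec_sum_le ha _ _).trans_eq ?_
  simp only [mul_pow, ← Finset.mul_sum, gradEnergy]
  norm_num

end SumSq

theorem spatialGrad_elapsedTime (s : ℝ) : spatialGrad (fun q : SpaceTime n => q.1 - s) p = 0 := by
  ext i
  simp [spatialGrad, dirDeriv, spaceUnit, fderiv_sub_const, fderiv_fst]

theorem parabolicOp_elapsedTime (s : ℝ) : parabolicOp a (fun q => q.1 - s) p = -1 := by
  have hfirst (v : SpaceTime n) : (dirDeriv v fun q => q.1 - s) = fun _ => v.1 := by
    ext
    simp [dirDeriv, fderiv_sub_const, fderiv_fst]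
  simp [parabolicOp, hessian, hfirst, dirDeriv_const, timeUnit, Matrix.trace, Matrix.mul_apply]

end ParabolicOperator

section MaximumPrinciple

theorem deriv_deriv_nonpos_of_isLocalMax {g : ℝ → ℝ} {r : ℝ} (hmax : IsLocalMax g r)
    (hg : ContinuousAt g r) : deriv (deriv g) r ≤ 0 := by
  by_contra! hpos
  have hmin : IsLocalMin g r := isLocalMin_of_deriv_deriv_pos hpos hmax.deriv_eq_zero hg
  have hconst : g =ᶠ[𝓝 r] fun _ => g r :=
    (hmin.and hmax).mono fun _ h => le_antisymm h.2 h.1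
  have hzero : deriv (deriv g) r = 0 := by
    rw [hconst.deriv.deriv_eq]
    simp
  exact hpos.ne' hzero

theorem dirDeriv_dirDeriv_nonpos_of_isLocalMax {E : Type*} [NormedAddCommGroup E]
    [NormedSpace ℝ E] {Q : E → ℝ} {p v : E} (hQ : ContDiffAt ℝ ∞ Q p)
    (hmax : IsLocalMax (fun r : ℝ => Q (p + r • v)) 0) : dirDeriv v (dirDeriv v Q) p ≤ 0 := by
  have hline : Filter.Tendsto (fun r : ℝ => p + r • v) (𝓝 0) (𝓝 p) :=
    Continuous.tendsto' (by fun_prop) _ _ (by simp)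
  have hfirst : deriv (fun r : ℝ => Q (p + r • v)) =ᶠ[𝓝 0] fun r => dirDeriv v Q (p + r • v) :=
    (hline.eventually (eventually_differentiableAt hQ)).mono fun r hr => deriv_comp_line v hr
  have hcont : ContinuousAt (fun r : ℝ => Q (p + r • v)) 0 :=
    hQ.continuousAt.comp_of_eq (by fun_prop) (by simp)
  have hdiff : DifferentiableAt ℝ (dirDeriv v Q) (p + (0 : ℝ) • v) := by
    rw [zero_smul, add_zero]
    fun_prop
  have h := deriv_deriv_nonpos_of_isLocalMax hmax hcont
  rwa [hfirst.deriv_eq, deriv_comp_line v hdiff, zero_smul, add_zero] at h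

variable {n : ℕ} {Q : SpaceTime n → ℝ} {p : SpaceTime n}

/-- The first and second order conditions satisfied at a maximum over a space-time cylinder that is
not attained on the parabolic boundary. -/
structure IsParabolicMax (Q : SpaceTime n → ℝ) (p : SpaceTime n) : Prop where
  spatialGrad_eq_zero : spatialGrad Q p = 0
  neg_hessian_posSemidef : (-hessian Q p).PosSemidef
  timeDeriv_nonneg : 0 ≤ ∂ₜ Q p

theorem IsParabolicMax.parabolicOp_nonpos (h : IsParabolicMax Q p)
    {a : Matrix (Fin n) (Fin n) ℝ} (ha : a.PosSemidef) : parabolicOp a Q p ≤ 0 := by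
  have htrace := trace_mul_nonneg ha h.neg_hessian_posSemidef
  rw [Matrix.mul_neg, Matrix.trace_neg] at htrace
  have htime := h.timeDeriv_nonneg
  unfold parabolicOp
  linarith

/-- Time interval times closed ball, the domain of the parabolic estimates. -/
def parabolicCylinder (s T : ℝ) (x₀ : EuclideanSpace ℝ (Fin n)) (R : ℝ) : Set (SpaceTime n) :=
  Icc s T ×ˢ closedBall x₀ R

theorem dirDeriv_sum_smul_spaceUnit (Q : SpaceTime n → ℝ) (ξ : Fin n → ℝ) :
    dirDeriv (∑ i, ξ i • spaceUnit i) Q = fun p => ∑ i, ξ i * ∂[i] Q p := by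
  ext p
  simp [dirDeriv]

theorem dotProduct_hessian_mulVec (hQ : ContDiffAt ℝ ∞ Q p) (ξ : Fin n → ℝ) :
    ξ ⬝ᵥ hessian Q p *ᵥ ξ =
      dirDeriv (∑ i, ξ i • spaceUnit i) (dirDeriv (∑ i, ξ i • spaceUnit i) Q) p := by
  simp only [dirDeriv_sum_smul_spaceUnit]
  refine Finset.sum_congr rfl fun i _ => ?_
  simp (disch := fun_prop) only [dirDeriv_sum, dirDeriv_mul, dirDeriv_const]
  simp [hessian, Matrix.mulVec, dotProduct, mul_comm]

theorem sum_smul_spaceUnit (ξ : Fin n → ℝ) :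
    ∑ i, ξ i • spaceUnit i = ((0, WithLp.toLp 2 ξ) : SpaceTime n) := by
  ext i
  · simp [spaceUnit, Prod.fst_sum]
  · simp [spaceUnit, Prod.snd_sum, Finset.sum_apply, Pi.single_apply]

theorem timeDeriv_nonneg_of_isMaxOn {s T R : ℝ} {x₀ : EuclideanSpace ℝ (Fin n)}
    (hQ : DifferentiableAt ℝ Q p) (hp : p ∈ parabolicCylinder s T x₀ R) (hsp : s < p.1)
    (hmax : IsMaxOn Q (parabolicCylinder s T x₀ R) p) : 0 ≤ ∂ₜ Q p := by
  obtain ⟨⟨-, hpT⟩, hpx⟩ := hp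
  have hsegment : segment ℝ p (p + (s - p.1) • timeUnit) ⊆ parabolicCylinder s T x₀ R := by
    rw [segment_eq_image']
    rintro _ ⟨θ, ⟨hθ0, hθ1⟩, rfl⟩
    refine ⟨⟨?_, ?_⟩, by simpa [timeUnit] using hpx⟩ <;> simp [timeUnit] <;> nlinarith
  have hbackward := hmax.localize.hasFDerivWithinAt_nonpos hQ.hasFDerivAt.hasFDerivWithinAt
    (mem_posTangentConeAt_of_segment_subset hsegment)
  rw [map_smul, smul_eq_mul] at hbackward
  exact nonneg_of_mul_nonpos_right hbackward (by linarith)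

theorem isParabolicMax_of_isMaxOn {s T R : ℝ} {x₀ : EuclideanSpace ℝ (Fin n)}
    (hQ : ContDiffAt ℝ ∞ Q p) (hp : p ∈ parabolicCylinder s T x₀ R) (hsp : s < p.1)
    (hpR : dist p.2 x₀ < R) (hmax : IsMaxOn Q (parabolicCylinder s T x₀ R) p) :
    IsParabolicMax Q p := by
  have hspace (v : EuclideanSpace ℝ (Fin n)) :
      IsLocalMax (fun r : ℝ => Q (p + r • ((0, v) : SpaceTime n))) 0 := by
    have hball : ∀ᶠ r in 𝓝 (0 : ℝ), p.2 + r • v ∈ ball x₀ R :=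
      ContinuousAt.eventually_mem (by fun_prop) (isOpen_ball.mem_nhds (by simpa using hpR))
    filter_upwards [hball] with r hr
    have hmem : p + r • ((0, v) : SpaceTime n) ∈ parabolicCylinder s T x₀ R :=
      ⟨by simpa using hp.1, by simpa using ball_subset_closedBall hr⟩
    simpa using hmax hmem
  refine ⟨?_, .of_dotProduct_mulVec_nonneg ?_ fun ξ => ?_,
    timeDeriv_nonneg_of_isMaxOn (by fun_prop) hp hsp hmax⟩
  · ext i
    have hcrit := (hspace (EuclideanSpace.single i 1)).deriv_eq_zero
    rwa [deriv_comp_line _ (by simpa using differentiableAt_of_contDiffAt_infty hQ), zero_smul,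
      add_zero] at hcrit
  · ext i j
    simp [hessian, dirDeriv_comm hQ (spaceUnit j)]
  · rw [Matrix.neg_mulVec, dotProduct_neg, star_trivial, dotProduct_hessian_mulVec hQ,
      sum_smul_spaceUnit]
    exact neg_nonneg.2 (dirDeriv_dirDeriv_nonpos_of_isLocalMax hQ (hspace _))

theorem le_on_parabolicCylinder {s T R M : ℝ} {x₀ : EuclideanSpace ℝ (Fin n)}
    (hQ : ∀ p ∈ parabolicCylinder s T x₀ R, ContDiffAt ℝ ∞ Q p)
    (bottom : ∀ x ∈ closedBall x₀ R, Q (s, x) ≤ M)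
    (lateral : ∀ t ∈ Icc s T, ∀ x ∈ sphere x₀ R, Q (t, x) ≤ M)
    (interior : ∀ p ∈ parabolicCylinder s T x₀ R, s < p.1 → dist p.2 x₀ < R →
      IsParabolicMax Q p → Q p ≤ M) :
    ∀ p ∈ parabolicCylinder s T x₀ R, Q p ≤ M := by
  intro p₀ hp₀
  have hcompact : IsCompact (parabolicCylinder s T x₀ R) :=
    isCompact_Icc.prod (isCompact_closedBall _ _)
  obtain ⟨p, hp, hmax⟩ := hcompact.exists_isMaxOn ⟨p₀, hp₀⟩
    fun q hq => (hQ q hq).continuousAt.continuousWithinAt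
  refine (hmax hp₀).trans ?_
  rcases hp.1.1.eq_or_lt with hps | hsp
  · have h := bottom p.2 hp.2
    rwa [hps] at h
  rcases (mem_closedBall.1 hp.2).eq_or_lt with hpR | hpR
  · exact lateral p.1 hp.1 p.2 hpR
  · exact interior p hp hsp hpR (isParabolicMax_of_isMaxOn (hQ p hp) hp hsp hpR hmax)

end MaximumPrinciple

section Cutoff

variable {n : ℕ} {x₀ : EuclideanSpace ℝ (Fin n)} {R : ℝ} {p : SpaceTime n}
  {a : Matrix (Fin n) (Fin n) ℝ}

/-- The paraboloid `R² - |x - x₀|²`, which localizes the maximum principle to `B(x₀, R)`. -/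
noncomputable def paraboloid (x₀ : EuclideanSpace ℝ (Fin n)) (R : ℝ) (p : SpaceTime n) : ℝ :=
  R ^ 2 - ‖p.2 - x₀‖ ^ 2

@[fun_prop]
theorem contDiffAt_paraboloid : ContDiffAt ℝ ∞ (paraboloid x₀ R) p := by
  unfold paraboloid
  exact contDiffAt_const.sub (ContDiffAt.norm_sq ℝ (by fun_prop))

theorem paraboloid_nonneg (hp : dist p.2 x₀ ≤ R) : 0 ≤ paraboloid x₀ R p := by
  rw [dist_eq_norm] at hp
  exact sub_nonneg.2 (pow_le_pow_left₀ (norm_nonneg _) hp 2)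

theorem paraboloid_pos (hp : dist p.2 x₀ < R) : 0 < paraboloid x₀ R p := by
  rw [dist_eq_norm] at hp
  exact sub_pos.2 (pow_lt_pow_left₀ hp (norm_nonneg _) two_ne_zero)

theorem paraboloid_le : paraboloid x₀ R p ≤ R ^ 2 :=
  sub_le_self _ (sq_nonneg _)

theorem paraboloid_eq_zero (hp : p.2 ∈ sphere x₀ R) : paraboloid x₀ R p = 0 := by
  rw [mem_sphere, dist_eq_norm] at hp
  simp [paraboloid, hp]

theorem paraboloid_center (t : ℝ) : paraboloid x₀ R (t, x₀) = R ^ 2 := by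
  simp [paraboloid]

theorem dirDeriv_paraboloid (v : SpaceTime n) :
    dirDeriv v (paraboloid x₀ R) = fun q => -(2 * inner ℝ (q.2 - x₀) v.2) := by
  ext q
  have hsub : HasFDerivAt (fun q : SpaceTime n => q.2 - x₀) (ContinuousLinearMap.snd ℝ ℝ _) q :=
    hasFDerivAt_snd.sub_const x₀
  have h := (hsub.norm_sq.const_sub (R ^ 2)).fderiv
  simp [dirDeriv, show paraboloid x₀ R = fun q => R ^ 2 - ‖q.2 - x₀‖ ^ 2 from rfl, h,
    inner_sub_left]

theorem spatialGrad_paraboloid :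
    spatialGrad (paraboloid x₀ R) p = (-2 : ℝ) • (p.2 - x₀ : EuclideanSpace ℝ (Fin n)).ofLp := by
  ext i
  simp [spatialGrad, dirDeriv_paraboloid, spaceUnit, EuclideanSpace.inner_single_right]

theorem hessian_paraboloid : hessian (paraboloid x₀ R) p = (-2 : ℝ) • 1 := by
  ext i j
  have hfirst : ∂[j] (paraboloid x₀ R) = fun q => -(2 * (q.2 j - x₀ j)) := by
    simp [dirDeriv_paraboloid, spaceUnit, EuclideanSpace.inner_single_right]
  have hcoord : HasFDerivAt (fun q : SpaceTime n => q.2 j)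
      ((EuclideanSpace.proj j).comp (ContinuousLinearMap.snd ℝ ℝ _)) p :=
    ((EuclideanSpace.proj (𝕜 := ℝ) j).comp (ContinuousLinearMap.snd ℝ ℝ _)).hasFDerivAt
  have h := ((hcoord.sub_const (x₀ j)).const_mul 2).fun_neg.fderiv
  rw [hessian, Matrix.of_apply, hfirst]
  by_cases hij : i = j <;> simp [dirDeriv, h, spaceUnit, hij, eq_comm]

theorem parabolicOp_paraboloid : parabolicOp a (paraboloid x₀ R) p = -2 * a.trace := by
  simp [parabolicOp, hessian_paraboloid, dirDeriv_paraboloid, timeUnit]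

theorem spatialGrad_paraboloid_form_le (ha : IsSubunit a) (hp : dist p.2 x₀ ≤ R) :
    spatialGrad (paraboloid x₀ R) p ⬝ᵥ a *ᵥ spatialGrad (paraboloid x₀ R) p ≤ 4 * R ^ 2 := by
  have hnorm : ‖p.2 - x₀‖ ^ 2 ≤ R ^ 2 := by linarith [paraboloid_nonneg hp, paraboloid.eq_1 x₀ R p]
  refine (ha.dotProduct_mulVec_self_le _).trans ?_
  rw [EuclideanSpace.real_norm_sq_eq] at hnorm
  simp only [spatialGrad_paraboloid, dotProduct, Pi.smul_apply, smul_eq_mul]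
  calc ∑ i, -2 * (p.2 - x₀).ofLp i * (-2 * (p.2 - x₀).ofLp i)
      = 4 * ∑ i, (p.2 - x₀).ofLp i ^ 2 := by
        rw [Finset.mul_sum]
        exact Finset.sum_congr rfl fun i _ => by ring
    _ ≤ 4 * R ^ 2 := by linarith

end Cutoff

section LocalEstimates

variable {n : ℕ} {s T R : ℝ} {x₀ : EuclideanSpace ℝ (Fin n)}
  {a : SpaceTime n → Matrix (Fin n) (Fin n) ℝ} {F G : SpaceTime n → ℝ}

theorem mem_parabolicCylinder_center (hR : 0 ≤ R) (hsT : s ≤ T) :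
    (T, x₀) ∈ parabolicCylinder s T x₀ R :=
  ⟨right_mem_Icc.2 hsT, mem_closedBall_self hR⟩

theorem subsolution_le_of_le_bottom {H₀ H₁ : ℝ} (hR : 0 < R) (hsT : s ≤ T) (hH₀ : 0 ≤ H₀)
    (hH₁ : 0 < H₁) (hG : ∀ p ∈ parabolicCylinder s T x₀ R, ContDiffAt ℝ ∞ G p)
    (ha : ∀ p ∈ parabolicCylinder s T x₀ R, IsSubunit (a p))
    (hop : ∀ p ∈ parabolicCylinder s T x₀ R, 0 ≤ parabolicOp (a p) G p)
    (bottom : ∀ x ∈ closedBall x₀ R, G (s, x) ≤ H₀)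
    (bound : ∀ p ∈ parabolicCylinder s T x₀ R, G p ≤ H₁) :
    G (T, x₀) ≤ H₀ + (2 * n + 1) / R ^ 2 * (T - s) * H₁ := by
  have hR2 : 0 < R ^ 2 := by positivity
  have hh : 0 < H₁ / R ^ 2 := by positivity
  have hcancel : H₁ / R ^ 2 * R ^ 2 = H₁ := div_mul_cancel₀ _ hR2.ne'
  have barrier := le_on_parabolicCylinder (M := H₀ + H₁) (s := s) (T := T) (x₀ := x₀) (R := R)
    (Q := fun q => G q + (H₁ / R ^ 2 * paraboloid x₀ R q +
      -((2 * n + 1) * (H₁ / R ^ 2)) * (q.1 - s)))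
    (fun p hp => by have := hG p hp; fun_prop)
    (fun x hx => ?bottom) (fun t ht x hx => ?lateral) (fun p hp _ _ hmax => ?interior)
    (T, x₀) (mem_parabolicCylinder_center hR.le hsT)
  case bottom =>
    have hz := mul_le_mul_of_nonneg_left (paraboloid_le (x₀ := x₀) (R := R) (p := (s, x))) hh.le
    linarith [bottom x hx]
  case lateral =>
    have hdecay : 0 ≤ (2 * n + 1) * (H₁ / R ^ 2) * (t - s) :=
      mul_nonneg (by positivity) (sub_nonneg.2 ht.1)
    have hz : paraboloid x₀ R (t, x) = 0 := paraboloid_eq_zero hx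
    rw [hz]
    linarith [bound (t, x) ⟨ht, sphere_subset_closedBall hx⟩]
  case interior =>
    have hGp := hG p hp
    have hnonpos := hmax.parabolicOp_nonpos (ha p hp).posSemidef
    rw [parabolicOp_add hGp (by fun_prop), parabolicOp_add (by fun_prop) (by fun_prop),
      parabolicOp_const_mul _ (by fun_prop), parabolicOp_const_mul _ (by fun_prop),
      parabolicOp_paraboloid, parabolicOp_elapsedTime] at hnonpos
    have htrace := (ha p hp).trace_le
    rw [Fintype.card_fin] at htrace
    nlinarith [hop p hp]
  rw [paraboloid_center] at barrier
  have hrate : (2 * n + 1) / R ^ 2 * (T - s) * H₁ = (2 * n + 1) * (H₁ / R ^ 2) * (T - s) := by ring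
  linarith

theorem parabolicOp_paraboloid_sq_mul {p : SpaceTime n} (ha : (a p).PosSemidef)
    (hF : ContDiffAt ℝ ∞ F p) :
    parabolicOp (a p) (fun q => paraboloid x₀ R q ^ 2 * F q) p =
      paraboloid x₀ R p ^ 2 * parabolicOp (a p) F p +
        (2 * (spatialGrad (paraboloid x₀ R) p ⬝ᵥ a p *ᵥ spatialGrad (paraboloid x₀ R) p) -
          4 * paraboloid x₀ R p * (a p).trace) * F p +
        4 * paraboloid x₀ R p *
          (spatialGrad (paraboloid x₀ R) p ⬝ᵥ a p *ᵥ spatialGrad F p) := by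
  rw [parabolicOp_mul ha (by fun_prop) hF, parabolicOp_sq (by fun_prop),
    spatialGrad_sq (by fun_prop), parabolicOp_paraboloid, smul_dotProduct, smul_eq_mul]
  ring

theorem le_parabolicOp_paraboloid_sq_mul {p : SpaceTime n} (ha : IsSubunit (a p))
    (hp : dist p.2 x₀ ≤ R) (hF : ContDiffAt ℝ ∞ F p) (hFpos : 0 < F p)
    (hgrad : spatialGrad F p ⬝ᵥ a p *ᵥ spatialGrad F p ≤ 2 * F p * parabolicOp (a p) F p) :
    -((4 * n + 24) * R ^ 2 * F p) ≤
      parabolicOp (a p) (fun q => paraboloid x₀ R q ^ 2 * F q) p := by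
  rw [parabolicOp_paraboloid_sq_mul ha.posSemidef hF]
  have hz0 := paraboloid_nonneg hp
  have hzR := paraboloid_le (x₀ := x₀) (R := R) (p := p)
  have hDz := spatialGrad_paraboloid_form_le ha hp
  have hDz0 := dotProduct_mulVec_self_nonneg ha.posSemidef (spatialGrad (paraboloid x₀ R) p)
  have htrace := ha.trace_le
  rw [Fintype.card_fin] at htrace
  set z := paraboloid x₀ R p
  set Dz := spatialGrad (paraboloid x₀ R) p
  set DF := spatialGrad F p
  have hyoung : 0 ≤ z ^ 2 * (DF ⬝ᵥ a p *ᵥ DF) + 8 * z * F p * (Dz ⬝ᵥ a p *ᵥ DF) +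
      16 * F p ^ 2 * (Dz ⬝ᵥ a p *ᵥ Dz) := by
    have h := dotProduct_mulVec_self_nonneg ha.posSemidef (z • DF + (4 * F p) • Dz)
    simp only [Matrix.mulVec_add, Matrix.mulVec_smul, add_dotProduct, dotProduct_add,
      smul_dotProduct, dotProduct_smul, smul_eq_mul,
      dotProduct_mulVec_comm ha.posSemidef DF Dz] at h
    linarith
  have hcross : 0 ≤ z ^ 2 * parabolicOp (a p) F p + 4 * z * (Dz ⬝ᵥ a p *ᵥ DF) +
      8 * F p * (Dz ⬝ᵥ a p *ᵥ Dz) := by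
    refine (mul_nonneg_iff_of_pos_left (by positivity : 0 < 2 * F p)).1 ?_
    nlinarith [mul_le_mul_of_nonneg_left hgrad (sq_nonneg z)]
  have hztrace : z * (a p).trace ≤ n * R ^ 2 := by
    nlinarith [mul_le_mul_of_nonneg_left htrace hz0, (Nat.cast_nonneg n : (0 : ℝ) ≤ n)]
  nlinarith [mul_le_mul_of_nonneg_right hztrace hFpos.le, mul_le_mul_of_nonneg_right hDz hFpos.le]

theorem parabolicOp_elapsedTime_mul {p : SpaceTime n} (ha : (a p).PosSemidef)
    (hF : ContDiffAt ℝ ∞ F p) :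
    parabolicOp (a p) (fun q => (q.1 - s) * F q) p = (p.1 - s) * parabolicOp (a p) F p - F p := by
  rw [parabolicOp_mul ha (by fun_prop) hF, spatialGrad_elapsedTime, parabolicOp_elapsedTime,
    zero_dotProduct]
  ring

/-- The rate at which interior estimates smooth after time `τ` on a ball of radius `R`: the price of
cutting off in time plus that of cutting off in space with a squared paraboloid. -/
noncomputable def smoothingRate (n : ℕ) (τ R : ℝ) : ℝ :=
  1 / τ + (4 * n + 24) / R ^ 2

theorem smoothingRate_pos (n : ℕ) {τ : ℝ} (hτ : 0 < τ) (R : ℝ) : 0 < smoothingRate n τ R := by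
  unfold smoothingRate
  positivity

theorem mul_smoothingRate (n : ℕ) {τ R : ℝ} (hτ : 0 < τ) (hR : 0 < R) :
    τ * R ^ 4 * smoothingRate n τ R = R ^ 4 + τ * ((4 * n + 24) * R ^ 2) := by
  unfold smoothingRate
  field_simp

theorem le_parabolicOp_cutoff_mul {p : SpaceTime n} (hR : 0 < R) (hsT : s < T)
    (ha : IsSubunit (a p)) (hp : p ∈ parabolicCylinder s T x₀ R) (hF : ContDiffAt ℝ ∞ F p)
    (hFpos : 0 < F p)
    (hgrad : spatialGrad F p ⬝ᵥ a p *ᵥ spatialGrad F p ≤ 2 * F p * parabolicOp (a p) F p) :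
    -((T - s) * R ^ 4 * smoothingRate n (T - s) R * F p) ≤
      parabolicOp (a p) (fun q => (q.1 - s) * (paraboloid x₀ R q ^ 2 * F q)) p := by
  have hpR : dist p.2 x₀ ≤ R := hp.2
  rw [parabolicOp_elapsedTime_mul ha.posSemidef (by fun_prop),
    mul_smoothingRate n (sub_pos.2 hsT) hR]
  have hspace := mul_le_mul_of_nonneg_left (le_parabolicOp_paraboloid_sq_mul ha hpR hF hFpos hgrad)
    (sub_nonneg.2 hp.1.1)
  have htime : (p.1 - s) * ((4 * n + 24) * R ^ 2 * F p) ≤ (T - s) * ((4 * n + 24) * R ^ 2 * F p) :=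
    mul_le_mul_of_nonneg_right (sub_le_sub_right hp.1.2 s) (by positivity)
  have hz : paraboloid x₀ R p ^ 2 * F p ≤ (R ^ 2) ^ 2 * F p :=
    mul_le_mul_of_nonneg_right (pow_le_pow_left₀ (paraboloid_nonneg hpR) paraboloid_le 2) hFpos.le
  linarith

/- The maximum principle is applied to `(t - s)(R² - |x - x₀|²)² F + A G`: the good term of `G`
absorbs the errors of the cutoff, which are proportional to `F`. -/
theorem le_of_strict_subsolution_comparison {H κ : ℝ} (hR : 0 < R) (hsT : s < T) (hκ : 0 < κ)
    (hF : ∀ p ∈ parabolicCylinder s T x₀ R, ContDiffAt ℝ ∞ F p)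
    (hG : ∀ p ∈ parabolicCylinder s T x₀ R, ContDiffAt ℝ ∞ G p)
    (ha : ∀ p ∈ parabolicCylinder s T x₀ R, IsSubunit (a p))
    (hF0 : ∀ p ∈ parabolicCylinder s T x₀ R, 0 ≤ F p)
    (hgrad : ∀ p ∈ parabolicCylinder s T x₀ R, 0 < F p →
      spatialGrad F p ⬝ᵥ a p *ᵥ spatialGrad F p ≤ 2 * F p * parabolicOp (a p) F p)
    (hG0 : 0 ≤ G (T, x₀)) (hGH : ∀ p ∈ parabolicCylinder s T x₀ R, G p ≤ H)
    (hop : ∀ p ∈ parabolicCylinder s T x₀ R, 0 < F p → κ * F p < parabolicOp (a p) G p) :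
    F (T, x₀) ≤ smoothingRate n (T - s) R * (H / κ) := by
  have hT : 0 < T - s := sub_pos.2 hsT
  have hrate := smoothingRate_pos n hT R
  set A := (T - s) * R ^ 4 * smoothingRate n (T - s) R / κ with hA
  have hApos : 0 < A := by positivity
  have hAG (p) (hp : p ∈ parabolicCylinder s T x₀ R) : A * G p ≤ A * H :=
    mul_le_mul_of_nonneg_left (hGH p hp) hApos.le
  have bound := le_on_parabolicCylinder (M := A * H) (s := s) (T := T) (x₀ := x₀) (R := R)
    (Q := fun q => (q.1 - s) * (paraboloid x₀ R q ^ 2 * F q) + A * G q)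
    (fun p hp => by have := hF p hp; have := hG p hp; fun_prop)
    (fun x hx => by simpa using hAG (s, x) ⟨left_mem_Icc.2 hsT.le, hx⟩)
    (fun t ht x hx => ?lateral) (fun p hp _ _ hmax => ?interior)
    (T, x₀) (mem_parabolicCylinder_center hR.le hsT.le)
  case lateral =>
    have hz : paraboloid x₀ R (t, x) = 0 := paraboloid_eq_zero hx
    simpa [hz] using hAG (t, x) ⟨ht, sphere_subset_closedBall hx⟩
  case interior =>
    have hFp := hF p hp
    rcases (hF0 p hp).eq_or_lt with hzero | hpos
    · simpa [← hzero] using hAG p hp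
    have hnonpos := hmax.parabolicOp_nonpos (ha p hp).posSemidef
    rw [parabolicOp_add (by fun_prop) (contDiffAt_const.mul (hG p hp)),
      parabolicOp_const_mul _ (hG p hp)] at hnonpos
    have hcut := le_parabolicOp_cutoff_mul hR hsT (ha p hp) hp hFp hpos (hgrad p hp hpos)
    have hgain := mul_lt_mul_of_pos_left (hop p hp hpos) hApos
    rw [← mul_assoc, hA, div_mul_cancel₀ _ hκ.ne', ← hA] at hgain
    linarith
  rw [paraboloid_center] at bound
  refine le_of_mul_le_mul_left ?_ (by positivity : 0 < (T - s) * R ^ 4)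
  calc (T - s) * R ^ 4 * F (T, x₀) ≤ A * H := by linarith [mul_nonneg hApos.le hG0]
    _ = (T - s) * R ^ 4 * (smoothingRate n (T - s) R * (H / κ)) := by rw [hA]; ring

theorem IsParabolicMax.spatialGrad_eq {p : SpaceTime n} (hsp : s < p.1) (hpR : dist p.2 x₀ < R)
    (hF : ContDiffAt ℝ ∞ F p)
    (hmax : IsParabolicMax (fun q => (q.1 - s) * (paraboloid x₀ R q ^ 2 * F q)) p) :
    paraboloid x₀ R p • spatialGrad F p = (-2 * F p) • spatialGrad (paraboloid x₀ R) p := by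
  have hcrit := hmax.spatialGrad_eq_zero
  rw [spatialGrad_mul (by fun_prop) (by fun_prop), spatialGrad_elapsedTime, smul_zero, zero_add,
    spatialGrad_mul (by fun_prop) (by fun_prop), spatialGrad_sq (by fun_prop)] at hcrit
  ext i
  have hcoord := congrFun hcrit i
  simp only [Pi.smul_apply, Pi.add_apply, Pi.zero_apply, smul_eq_mul] at hcoord ⊢
  have hfactor : (p.1 - s) * paraboloid x₀ R p ≠ 0 :=
    (mul_pos (sub_pos.2 hsp) (paraboloid_pos hpR)).ne'
  refine mul_left_cancel₀ hfactor ?_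
  linarith

theorem IsParabolicMax.cutoff_mul_le_of_riccati {c : ℝ} {p : SpaceTime n}
    (hmax : IsParabolicMax (fun q => (q.1 - s) * (paraboloid x₀ R q ^ 2 * F q)) p)
    (hR : 0 < R) (ha : IsSubunit (a p)) (hp : p ∈ parabolicCylinder s T x₀ R) (hsp : s < p.1)
    (hpR : dist p.2 x₀ < R) (hF : ContDiffAt ℝ ∞ F p) (hFpos : 0 < F p)
    (hop : c * F p ^ 2 ≤ parabolicOp (a p) F p) :
    c * ((p.1 - s) * (paraboloid x₀ R p ^ 2 * F p)) ≤
      (T - s) * R ^ 4 * smoothingRate n (T - s) R := by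
  have hnonpos := hmax.parabolicOp_nonpos ha.posSemidef
  rw [parabolicOp_elapsedTime_mul ha.posSemidef (by fun_prop),
    parabolicOp_paraboloid_sq_mul ha.posSemidef hF] at hnonpos
  have hcross := congrArg (fun ξ => spatialGrad (paraboloid x₀ R) p ⬝ᵥ a p *ᵥ ξ)
    (hmax.spatialGrad_eq hsp hpR hF)
  simp only [Matrix.mulVec_smul, dotProduct_smul, smul_eq_mul] at hcross
  rw [mul_smoothingRate n (sub_pos.2 (hsp.trans_le hp.1.2)) hR]
  have hz0 := paraboloid_nonneg hpR.le
  have hzR := paraboloid_le (x₀ := x₀) (R := R) (p := p)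
  have hDz := spatialGrad_paraboloid_form_le ha hpR.le
  have htrace := ha.trace_le
  rw [Fintype.card_fin] at htrace
  set z := paraboloid x₀ R p
  set DzDz := spatialGrad (paraboloid x₀ R) p ⬝ᵥ a p *ᵥ spatialGrad (paraboloid x₀ R) p
  set DzDF := spatialGrad (paraboloid x₀ R) p ⬝ᵥ a p *ᵥ spatialGrad F p
  have : 0 < p.1 - s := sub_pos.2 hsp
  have hz4 : z ^ 2 ≤ R ^ 4 := (pow_le_pow_left₀ hz0 hzR 2).trans_eq (by ring)
  have hztrace : z * (a p).trace ≤ n * R ^ 2 := by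
    nlinarith [mul_le_mul_of_nonneg_left htrace hz0, (Nat.cast_nonneg n : (0 : ℝ) ≤ n)]
  refine le_of_mul_le_mul_right ?_ hFpos
  calc c * ((p.1 - s) * (z ^ 2 * F p)) * F p = (p.1 - s) * (z ^ 2 * (c * F p ^ 2)) := by ring
    _ ≤ (p.1 - s) * (z ^ 2 * parabolicOp (a p) F p) := by gcongr
    _ ≤ (z ^ 2 + (p.1 - s) * (4 * (z * (a p).trace) + 6 * DzDz)) * F p := by
      linear_combination hnonpos - 4 * (p.1 - s) * hcross
    _ ≤ (R ^ 4 + (p.1 - s) * ((4 * n + 24) * R ^ 2)) * F p := by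
      gcongr
      linarith
    _ ≤ (R ^ 4 + (T - s) * ((4 * n + 24) * R ^ 2)) * F p := by
      gcongr
      exact hp.1.2

theorem le_of_riccati {c : ℝ} (hR : 0 < R) (hsT : s < T) (hc : 0 < c)
    (hF : ∀ p ∈ parabolicCylinder s T x₀ R, ContDiffAt ℝ ∞ F p)
    (ha : ∀ p ∈ parabolicCylinder s T x₀ R, IsSubunit (a p))
    (hop : ∀ p ∈ parabolicCylinder s T x₀ R, 0 < F p → c * F p ^ 2 ≤ parabolicOp (a p) F p) :
    F (T, x₀) ≤ smoothingRate n (T - s) R / c := by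
  have hT : 0 < T - s := sub_pos.2 hsT
  have hrate := smoothingRate_pos n hT R
  have hMpos : 0 ≤ (T - s) * R ^ 4 * (smoothingRate n (T - s) R / c) := by positivity
  have bound := le_on_parabolicCylinder (M := (T - s) * R ^ 4 * (smoothingRate n (T - s) R / c))
    (s := s) (T := T) (x₀ := x₀) (R := R)
    (Q := fun q => (q.1 - s) * (paraboloid x₀ R q ^ 2 * F q))
    (fun p hp => by have := hF p hp; fun_prop)
    (fun x _ => by simpa using hMpos) (fun t _ x hx => ?lateral)
    (fun p hp hsp hpR hmax => ?interior)
    (T, x₀) (mem_parabolicCylinder_center hR.le hsT.le)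
  case lateral =>
    have hz : paraboloid x₀ R (t, x) = 0 := paraboloid_eq_zero hx
    simpa [hz] using hMpos
  case interior =>
    have hτ := sub_pos.2 hsp
    rcases le_or_gt (F p) 0 with hnonpos | hpos
    · exact (mul_nonpos_of_nonneg_of_nonpos hτ.le
        (mul_nonpos_of_nonneg_of_nonpos (sq_nonneg _) hnonpos)).trans hMpos
    rw [mul_div_assoc', le_div_iff₀' hc]
    exact hmax.cutoff_mul_le_of_riccati hR (ha p hp) hp hsp hpR (hF p hp) hpos (hop p hp hpos)
  rw [paraboloid_center] at bound
  refine le_of_mul_le_mul_left ?_ (by positivity : 0 < (T - s) * R ^ 4)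
  linarith

end LocalEstimates

section GraphicalMCF

variable {n : ℕ} {u : SpaceTime n → ℝ} {p : SpaceTime n}

/-- The squared slope `|Du|²` of a graph. -/
noncomputable def gradSq (u : SpaceTime n → ℝ) (p : SpaceTime n) : ℝ :=
  ∑ i, ∂[i] u p ^ 2

theorem gradSq_nonneg (u : SpaceTime n → ℝ) (p : SpaceTime n) : 0 ≤ gradSq u p :=
  Finset.sum_nonneg fun _ _ => sq_nonneg _

theorem gradSq_eq_dotProduct (u : SpaceTime n → ℝ) (p : SpaceTime n) :
    gradSq u p = spatialGrad u p ⬝ᵥ spatialGrad u p := by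
  simp only [gradSq, spatialGrad, dotProduct, sq]

@[fun_prop]
theorem contDiffAt_gradSq (hu : ContDiffAt ℝ ∞ u p) : ContDiffAt ℝ ∞ (gradSq u) p := by
  unfold gradSq
  fun_prop

/-- The reciprocal `1 / (1 + |Du|²)` of the squared area element of a graph. -/
noncomputable def invAreaSq (u : SpaceTime n → ℝ) (p : SpaceTime n) : ℝ :=
  (1 + gradSq u p)⁻¹

theorem one_add_gradSq_pos (u : SpaceTime n → ℝ) (p : SpaceTime n) : 0 < 1 + gradSq u p := by
  linarith [gradSq_nonneg u p]

theorem invAreaSq_pos (u : SpaceTime n → ℝ) (p : SpaceTime n) : 0 < invAreaSq u p :=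
  inv_pos.2 (one_add_gradSq_pos u p)

theorem invAreaSq_mul_one_add_gradSq (u : SpaceTime n → ℝ) (p : SpaceTime n) :
    invAreaSq u p * (1 + gradSq u p) = 1 :=
  inv_mul_cancel₀ (one_add_gradSq_pos u p).ne'

theorem contDiffAt_inv_one_add {x : ℝ} (hx : 0 < 1 + x) :
    ContDiffAt ℝ ∞ (fun y : ℝ => (1 + y)⁻¹) x :=
  ContDiffAt.inv (by fun_prop) hx.ne'

@[fun_prop]
theorem contDiffAt_invAreaSq (hu : ContDiffAt ℝ ∞ u p) : ContDiffAt ℝ ∞ (invAreaSq u) p :=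
  (contDiffAt_inv_one_add (one_add_gradSq_pos u p)).comp p (contDiffAt_gradSq hu)

/-- The coefficient matrix of the graphical mean curvature flow, which is the inverse of the metric
`1 + Du ⊗ Du` of the graph. -/
noncomputable def mcfCoeff (u : SpaceTime n → ℝ) (p : SpaceTime n) : Matrix (Fin n) (Fin n) ℝ :=
  1 - invAreaSq u p • Matrix.vecMulVec (spatialGrad u p) (spatialGrad u p)

theorem dotProduct_mcfCoeff_mulVec (ξ ζ : Fin n → ℝ) :
    ξ ⬝ᵥ mcfCoeff u p *ᵥ ζ =
      ξ ⬝ᵥ ζ - invAreaSq u p * ((spatialGrad u p ⬝ᵥ ξ) * (spatialGrad u p ⬝ᵥ ζ)) := by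
  simp only [mcfCoeff, Matrix.sub_mulVec, Matrix.one_mulVec, Matrix.smul_mulVec,
    Matrix.vecMulVec_mulVec, dotProduct_sub, dotProduct_smul, op_smul_eq_smul,
    smul_eq_mul, dotProduct_comm ξ (spatialGrad u p), mul_comm]

theorem invAreaSq_mul_dotProduct_self_le (ξ : Fin n → ℝ) :
    invAreaSq u p * (ξ ⬝ᵥ ξ) ≤ ξ ⬝ᵥ mcfCoeff u p *ᵥ ξ := by
  have hcs : (spatialGrad u p ⬝ᵥ ξ) ^ 2 ≤ gradSq u p * (ξ ⬝ᵥ ξ) := by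
    simpa [dotProduct, gradSq, spatialGrad, sq] using
      Finset.sum_mul_sq_le_sq_mul_sq Finset.univ (spatialGrad u p) ξ
  have hr := mul_le_mul_of_nonneg_left hcs (invAreaSq_pos u p).le
  have hone := congrArg (· * (ξ ⬝ᵥ ξ)) (invAreaSq_mul_one_add_gradSq u p)
  rw [dotProduct_mcfCoeff_mulVec]
  linarith

theorem isSubunit_mcfCoeff (u : SpaceTime n → ℝ) (p : SpaceTime n) :
    IsSubunit (mcfCoeff u p) where
  posSemidef := by
    refine .of_dotProduct_mulVec_nonneg ?_ fun ξ => ?_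
    · ext i j
      simp [mcfCoeff, Matrix.vecMulVec_apply, Matrix.one_apply, eq_comm, mul_comm]
    · have hξ : 0 ≤ ξ ⬝ᵥ ξ := by simpa using dotProduct_star_self_nonneg ξ
      exact (mul_nonneg (invAreaSq_pos u p).le hξ).trans (invAreaSq_mul_dotProduct_self_le ξ)
  one_sub_posSemidef := by
    rw [mcfCoeff, sub_sub_cancel]
    exact (Matrix.posSemidef_vecMulVec_self_star _).smul (invAreaSq_pos u p).le

theorem spatialGrad_form_mcfCoeff (u : SpaceTime n → ℝ) (p : SpaceTime n) :
    spatialGrad u p ⬝ᵥ mcfCoeff u p *ᵥ spatialGrad u p = invAreaSq u p * gradSq u p := by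
  rw [dotProduct_mcfCoeff_mulVec, ← gradSq_eq_dotProduct]
  linear_combination -gradSq u p * invAreaSq_mul_one_add_gradSq u p

/-- `u` is smooth and solves the graphical mean curvature flow equation near the space-time point
`p`. -/
def IsGraphicalMCFAt (u : SpaceTime n → ℝ) (p : SpaceTime n) : Prop :=
  ∀ᶠ q in 𝓝 p, ContDiffAt ℝ ∞ u q ∧ parabolicOp (mcfCoeff u q) u q = 0

theorem IsGraphicalMCFAt.contDiffAt (hu : IsGraphicalMCFAt u p) : ContDiffAt ℝ ∞ u p :=
  hu.self_of_nhds.1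

theorem IsGraphicalMCFAt.eventually (hu : IsGraphicalMCFAt u p) :
    ∀ᶠ q in 𝓝 p, IsGraphicalMCFAt u q :=
  eventually_eventually_nhds.2 hu

theorem IsGraphicalMCFAt.parabolicOp_eq_zero (hu : IsGraphicalMCFAt u p) :
    parabolicOp (mcfCoeff u p) u p = 0 :=
  hu.self_of_nhds.2

theorem parabolicOp_eq_sum (a : Matrix (Fin n) (Fin n) ℝ) (G : SpaceTime n → ℝ) :
    parabolicOp a G p = ∑ i, ∑ j, a i j * ∂[j] (∂[i] G) p - ∂ₜ G p := by
  simp [parabolicOp, hessian, Matrix.trace, Matrix.mul_apply]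

theorem dirDeriv_parabolicOp {A : SpaceTime n → Matrix (Fin n) (Fin n) ℝ} {G : SpaceTime n → ℝ}
    (hA : ∀ i j, ContDiffAt ℝ ∞ (fun q => A q i j) p) (hG : ContDiffAt ℝ ∞ G p)
    (v : SpaceTime n) :
    dirDeriv v (fun q => parabolicOp (A q) G q) p = parabolicOp (A p) (dirDeriv v G) p +
      ∑ i, ∑ j, dirDeriv v (fun q => A q i j) p * ∂[j] (∂[i] G) p := by
  have hcomm (i j : Fin n) :
      dirDeriv v (∂[j] (∂[i] G)) p = ∂[j] (∂[i] (dirDeriv v G)) p := by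
    rw [dirDeriv_comm (by fun_prop) v (spaceUnit j),
      dirDeriv_congr (eventually_dirDeriv_comm hG v (spaceUnit i))]
  simp only [parabolicOp_eq_sum]
  simp (disch := fun_prop) only [dirDeriv_sub, dirDeriv_sum, dirDeriv_mul]
  simp only [hcomm, dirDeriv_comm hG v timeUnit, Finset.sum_add_distrib]
  ring

/-- `∂ᵢu ∂ⱼu / (1 + |Du|²)`, the entry of the matrix `1 - mcfCoeff u`. -/
noncomputable def normalCoeff (u : SpaceTime n → ℝ) (i j : Fin n) (p : SpaceTime n) : ℝ :=
  invAreaSq u p * (∂[i] u p * ∂[j] u p)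

@[fun_prop]
theorem contDiffAt_normalCoeff (hu : ContDiffAt ℝ ∞ u p) (i j : Fin n) :
    ContDiffAt ℝ ∞ (normalCoeff u i j) p := by
  unfold normalCoeff
  fun_prop

theorem mcfCoeff_apply (i j : Fin n) :
    mcfCoeff u p i j = (1 : Matrix (Fin n) (Fin n) ℝ) i j - normalCoeff u i j p := by
  simp [mcfCoeff, normalCoeff, Matrix.vecMulVec_apply, spatialGrad]

@[fun_prop]
theorem contDiffAt_mcfCoeff (hu : ContDiffAt ℝ ∞ u p) (i j : Fin n) :
    ContDiffAt ℝ ∞ (fun q => mcfCoeff u q i j) p := by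
  simp only [mcfCoeff_apply]
  fun_prop

theorem dirDeriv_mcfCoeff (hu : ContDiffAt ℝ ∞ u p) (i j : Fin n) (v : SpaceTime n) :
    dirDeriv v (fun q => mcfCoeff u q i j) p = -dirDeriv v (normalCoeff u i j) p := by
  simp only [mcfCoeff_apply]
  rw [dirDeriv_sub (by fun_prop) (by fun_prop), dirDeriv_const, zero_sub]

theorem IsGraphicalMCFAt.parabolicOp_dirDeriv_eq_sum (hu : IsGraphicalMCFAt u p)
    (v : SpaceTime n) :
    parabolicOp (mcfCoeff u p) (dirDeriv v u) p =
      ∑ i, ∑ j, dirDeriv v (normalCoeff u i j) p * ∂[j] (∂[i] u) p := by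
  have hzero : (fun q => parabolicOp (mcfCoeff u q) u q) =ᶠ[𝓝 p] fun _ => 0 :=
    hu.mono fun _ hq => hq.2
  have h := dirDeriv_congr hzero v
  have hsmooth := hu.contDiffAt
  rw [dirDeriv_const, dirDeriv_parabolicOp (by fun_prop) hsmooth] at h
  simp only [dirDeriv_mcfCoeff hsmooth, neg_mul, Finset.sum_neg_distrib] at h
  linarith

theorem IsGraphicalMCFAt.parabolicOp_dirDeriv_dirDeriv (hu : IsGraphicalMCFAt u p)
    (v w : SpaceTime n) :
    parabolicOp (mcfCoeff u p) (dirDeriv w (dirDeriv v u)) p =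
      ∑ i, ∑ j, (dirDeriv w (dirDeriv v (normalCoeff u i j)) p * ∂[j] (∂[i] u) p +
        dirDeriv v (normalCoeff u i j) p * dirDeriv w (∂[j] (∂[i] u)) p +
        dirDeriv w (normalCoeff u i j) p * ∂[j] (∂[i] (dirDeriv v u)) p) := by
  have hfirst : (fun q => parabolicOp (mcfCoeff u q) (dirDeriv v u) q) =ᶠ[𝓝 p]
      fun q => ∑ i, ∑ j, dirDeriv v (normalCoeff u i j) q * ∂[j] (∂[i] u) q :=
    hu.eventually.mono fun _ hq => hq.parabolicOp_dirDeriv_eq_sum v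
  have h := dirDeriv_congr hfirst w
  have hsmooth := hu.contDiffAt
  rw [dirDeriv_parabolicOp (by fun_prop) (by fun_prop)] at h
  simp (disch := fun_prop) only [dirDeriv_sum, dirDeriv_mul, dirDeriv_mcfCoeff] at h
  simp only [neg_mul, Finset.sum_neg_distrib] at h
  simp only [Finset.sum_add_distrib] at h ⊢
  linarith

theorem dirDeriv_gradSq (hu : ContDiffAt ℝ ∞ u p) (v : SpaceTime n) :
    dirDeriv v (gradSq u) p = 2 * (spatialGrad u p ⬝ᵥ spatialGrad (dirDeriv v u) p) := by
  change dirDeriv v (fun q => ∑ i, ∂[i] u q ^ 2) p = _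
  simp only [sq]
  simp (disch := fun_prop) only [dirDeriv_sum, dirDeriv_mul]
  rw [dotProduct, Finset.mul_sum]
  refine Finset.sum_congr rfl fun i _ => ?_
  rw [dirDeriv_comm hu v, spatialGrad, spatialGrad]
  ring

theorem deriv_inv_one_add {x : ℝ} (hx : 0 < 1 + x) :
    deriv (fun y : ℝ => (1 + y)⁻¹) x = -((1 + x)⁻¹) ^ 2 := by
  have h := (((hasDerivAt_id' x).const_add 1).inv hx.ne').deriv
  rw [show (fun y : ℝ => (1 + y)⁻¹) = (fun y => 1 + y)⁻¹ from rfl, h]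
  field_simp

theorem deriv_deriv_inv_one_add {x : ℝ} (hx : 0 < 1 + x) :
    deriv (deriv fun y : ℝ => (1 + y)⁻¹) x = 2 * ((1 + x)⁻¹) ^ 3 := by
  have hdiff : DifferentiableAt ℝ (fun y : ℝ => (1 + y)⁻¹) x :=
    differentiableAt_of_contDiffAt_infty (contDiffAt_inv_one_add hx)
  have hfirst : deriv (fun y : ℝ => (1 + y)⁻¹) =ᶠ[𝓝 x] fun y => -((1 + y)⁻¹) ^ 2 := by
    filter_upwards [lt_mem_nhds (neg_lt_iff_pos_add'.2 hx)] with y hy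
      using deriv_inv_one_add (neg_lt_iff_pos_add'.1 hy)
  rw [hfirst.deriv_eq, (hdiff.hasDerivAt.fun_pow 2).fun_neg.deriv, deriv_inv_one_add hx]
  push_cast
  ring

theorem dirDeriv_invAreaSq (hu : ContDiffAt ℝ ∞ u p) (v : SpaceTime n) :
    dirDeriv v (invAreaSq u) p = -invAreaSq u p ^ 2 * dirDeriv v (gradSq u) p := by
  have hw := one_add_gradSq_pos u p
  change dirDeriv v (fun q => (1 + gradSq u q)⁻¹) p = _
  rw [dirDeriv_comp (φ := fun y => (1 + y)⁻¹)
    (differentiableAt_of_contDiffAt_infty (contDiffAt_inv_one_add hw)) (by fun_prop),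
    deriv_inv_one_add hw, invAreaSq]

theorem dirDeriv_normalCoeff (hu : ContDiffAt ℝ ∞ u p) (i j : Fin n) (v : SpaceTime n) :
    dirDeriv v (normalCoeff u i j) p =
      -invAreaSq u p ^ 2 * dirDeriv v (gradSq u) p * (∂[i] u p * ∂[j] u p) +
        invAreaSq u p * (∂[i] (dirDeriv v u) p * ∂[j] u p + ∂[i] u p * ∂[j] (dirDeriv v u) p) := by
  change dirDeriv v (fun q => invAreaSq u q * (∂[i] u q * ∂[j] u q)) p = _
  simp (disch := fun_prop) only [dirDeriv_mul]
  rw [dirDeriv_invAreaSq hu, dirDeriv_comm hu v, dirDeriv_comm hu v]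

theorem sum_mul_mul_hessian (hu : ContDiffAt ℝ ∞ u p) (ξ : Fin n → ℝ) :
    ∑ i, ∑ j, ξ i * ∂[j] u p * ∂[j] (∂[i] u) p = ξ ⬝ᵥ spatialGrad (gradSq u) p / 2 := by
  rw [dotProduct, Finset.sum_div]
  refine Finset.sum_congr rfl fun i _ => ?_
  rw [spatialGrad, dirDeriv_gradSq hu, dotProduct, Finset.mul_sum, Finset.mul_sum, Finset.sum_div]
  refine Finset.sum_congr rfl fun j _ => ?_
  simp only [spatialGrad]
  ring

theorem IsGraphicalMCFAt.parabolicOp_dirDeriv (hu : IsGraphicalMCFAt u p) (v : SpaceTime n) :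
    parabolicOp (mcfCoeff u p) (dirDeriv v u) p =
      invAreaSq u p * (spatialGrad (dirDeriv v u) p ⬝ᵥ mcfCoeff u p *ᵥ
        spatialGrad (gradSq u) p) := by
  have hsmooth := hu.contDiffAt
  have hgrad := sum_mul_mul_hessian hsmooth (spatialGrad u p)
  have hdir := sum_mul_mul_hessian hsmooth (spatialGrad (dirDeriv v u) p)
  have hswap : ∑ i, ∑ j, ∂[i] u p * ∂[j] (dirDeriv v u) p * ∂[j] (∂[i] u) p =
      spatialGrad (dirDeriv v u) p ⬝ᵥ spatialGrad (gradSq u) p / 2 := by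
    rw [← hdir, Finset.sum_comm]
    refine Finset.sum_congr rfl fun j _ => Finset.sum_congr rfl fun i _ => ?_
    rw [dirDeriv_comm hsmooth (spaceUnit j) (spaceUnit i), spatialGrad]
    ring
  have hsum : ∑ i, ∑ j, dirDeriv v (normalCoeff u i j) p * ∂[j] (∂[i] u) p =
      -invAreaSq u p ^ 2 * dirDeriv v (gradSq u) p *
        ∑ i, ∑ j, ∂[i] u p * ∂[j] u p * ∂[j] (∂[i] u) p +
      invAreaSq u p * (∑ i, ∑ j, ∂[i] (dirDeriv v u) p * ∂[j] u p * ∂[j] (∂[i] u) p +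
        ∑ i, ∑ j, ∂[i] u p * ∂[j] (dirDeriv v u) p * ∂[j] (∂[i] u) p) := by
    simp only [dirDeriv_normalCoeff hsmooth, Finset.mul_sum, ← Finset.sum_add_distrib]
    refine Finset.sum_congr rfl fun i _ => Finset.sum_congr rfl fun j _ => ?_
    ring
  simp only [spatialGrad] at hgrad hdir
  rw [hu.parabolicOp_dirDeriv_eq_sum, hsum, hgrad, hdir, hswap, dirDeriv_gradSq hsmooth,
    dotProduct_mcfCoeff_mulVec]
  ring

theorem IsGraphicalMCFAt.parabolicOp_gradSq (hu : IsGraphicalMCFAt u p) :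
    parabolicOp (mcfCoeff u p) (gradSq u) p =
      2 * gradEnergy (mcfCoeff u p) (fun k => ∂[k] u) p +
        invAreaSq u p * (spatialGrad (gradSq u) p ⬝ᵥ mcfCoeff u p *ᵥ
          spatialGrad (gradSq u) p) := by
  have hsmooth := hu.contDiffAt
  have hform : spatialGrad (gradSq u) p ⬝ᵥ mcfCoeff u p *ᵥ spatialGrad (gradSq u) p =
      ∑ k, 2 * ∂[k] u p * (spatialGrad (∂[k] u) p ⬝ᵥ mcfCoeff u p *ᵥ spatialGrad (gradSq u) p) := by
    have hgrad : spatialGrad (gradSq u) p = ∑ k, (2 * ∂[k] u p) • spatialGrad (∂[k] u) p :=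
      spatialGrad_sum_sq fun k => contDiffAt_dirDeriv hsmooth _
    conv_lhs => arg 1; rw [hgrad]
    simp only [sum_dotProduct, smul_dotProduct, smul_eq_mul]
  change parabolicOp (mcfCoeff u p) (fun q => ∑ k, ∂[k] u q ^ 2) p = _
  rw [parabolicOp_sum_sq (by fun_prop), hform, Finset.mul_sum, Finset.mul_sum, add_comm]
  refine congrArg _ (Finset.sum_congr rfl fun k _ => ?_)
  rw [hu.parabolicOp_dirDeriv]
  ring

theorem spatialGrad_gradSq_form_le (hu : ContDiffAt ℝ ∞ u p) :
    spatialGrad (gradSq u) p ⬝ᵥ mcfCoeff u p *ᵥ spatialGrad (gradSq u) p ≤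
      4 * gradSq u p * gradEnergy (mcfCoeff u p) (fun k => ∂[k] u) p :=
  spatialGrad_sum_sq_form_le (isSubunit_mcfCoeff u p).posSemidef
    fun k => contDiffAt_dirDeriv hu (spaceUnit k)

theorem IsGraphicalMCFAt.two_mul_gradEnergy_le (hu : IsGraphicalMCFAt u p) :
    2 * gradEnergy (mcfCoeff u p) (fun k => ∂[k] u) p ≤
      parabolicOp (mcfCoeff u p) (gradSq u) p := by
  rw [hu.parabolicOp_gradSq]
  exact le_add_of_nonneg_right (mul_nonneg (invAreaSq_pos u p).le
    (dotProduct_mulVec_self_nonneg (isSubunit_mcfCoeff u p).posSemidef _))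

theorem IsGraphicalMCFAt.spatialGrad_gradSq_form_le_parabolicOp (hu : IsGraphicalMCFAt u p) :
    spatialGrad (gradSq u) p ⬝ᵥ mcfCoeff u p *ᵥ spatialGrad (gradSq u) p ≤
      2 * gradSq u p * parabolicOp (mcfCoeff u p) (gradSq u) p := by
  have h := mul_le_mul_of_nonneg_left hu.two_mul_gradEnergy_le (gradSq_nonneg u p)
  linarith [spatialGrad_gradSq_form_le hu.contDiffAt]

end GraphicalMCF

section JetBounds

theorem abs_sum_le_card_mul {ι : Type*} [Fintype ι] {x : ι → ℝ} {b : ℝ} (hx : ∀ i, |x i| ≤ b) :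
    |∑ i, x i| ≤ Fintype.card ι * b :=
  (Finset.abs_sum_le_sum_abs _ _).trans
    ((Finset.sum_le_card_nsmul _ _ b fun i _ => hx i).trans_eq (by simp))

theorem abs_mul_le_mul {x y b c : ℝ} (hx : |x| ≤ b) (hy : |y| ≤ c) : |x * y| ≤ b * c :=
  (abs_mul x y).trans_le (mul_le_mul hx hy (abs_nonneg y) ((abs_nonneg x).trans hx))

variable {E κ ι : Type*} [NormedAddCommGroup E] [NormedSpace ℝ E] {e : κ → E} {p : E}

/-- `G` is smooth at `p`, and `b₀`, `b₁`, `b₂` bound its value and its first and second derivatives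
there in the directions `e k`. -/
structure HasJetBound (e : κ → E) (G : E → ℝ) (p : E) (b₀ b₁ b₂ : ℝ) : Prop where
  contDiffAt : ContDiffAt ℝ ∞ G p
  abs_le : |G p| ≤ b₀
  abs_dirDeriv_le : ∀ k, |dirDeriv (e k) G p| ≤ b₁
  abs_dirDeriv_dirDeriv_le : ∀ k l, |dirDeriv (e k) (dirDeriv (e l) G) p| ≤ b₂

namespace HasJetBound

variable {G H : E → ℝ} {b₀ b₁ b₂ c₀ c₁ c₂ : ℝ}

theorem mono (hG : HasJetBound e G p b₀ b₁ b₂) (h₀ : b₀ ≤ c₀) (h₁ : b₁ ≤ c₁) (h₂ : b₂ ≤ c₂) :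
    HasJetBound e G p c₀ c₁ c₂ :=
  ⟨hG.contDiffAt, hG.abs_le.trans h₀, fun k => (hG.abs_dirDeriv_le k).trans h₁,
    fun k l => (hG.abs_dirDeriv_dirDeriv_le k l).trans h₂⟩

theorem mul (hG : HasJetBound e G p b₀ b₁ b₂) (hH : HasJetBound e H p c₀ c₁ c₂) :
    HasJetBound e (fun q => G q * H q) p (b₀ * c₀) (b₁ * c₀ + b₀ * c₁)
      (b₂ * c₀ + b₀ * c₂ + (b₁ * c₁ + b₁ * c₁)) := by
  have hGs := hG.contDiffAt
  have hHs := hH.contDiffAt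
  refine ⟨by fun_prop, abs_mul_le_mul hG.abs_le hH.abs_le, fun k => ?_, fun k l => ?_⟩
  · rw [dirDeriv_mul (by fun_prop) (by fun_prop)]
    exact (abs_add_le _ _).trans (add_le_add (abs_mul_le_mul (hG.abs_dirDeriv_le k) hH.abs_le)
      (abs_mul_le_mul hG.abs_le (hH.abs_dirDeriv_le k)))
  · rw [dirDeriv_dirDeriv_mul hGs hHs]
    refine (abs_add_le _ _).trans (add_le_add ?_ ?_) <;>
      refine (abs_add_le _ _).trans (add_le_add ?_ ?_)
    · exact abs_mul_le_mul (hG.abs_dirDeriv_dirDeriv_le k l) hH.abs_le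
    · exact abs_mul_le_mul hG.abs_le (hH.abs_dirDeriv_dirDeriv_le k l)
    · exact abs_mul_le_mul (hG.abs_dirDeriv_le k) (hH.abs_dirDeriv_le l)
    · exact abs_mul_le_mul (hG.abs_dirDeriv_le l) (hH.abs_dirDeriv_le k)

theorem sum [Fintype ι] {F : ι → E → ℝ} (hF : ∀ i, HasJetBound e (F i) p b₀ b₁ b₂) :
    HasJetBound e (fun q => ∑ i, F i q) p (Fintype.card ι * b₀) (Fintype.card ι * b₁)
      (Fintype.card ι * b₂) := by
  have hFs i := (hF i).contDiffAt
  refine ⟨by fun_prop, abs_sum_le_card_mul fun i => (hF i).abs_le, fun k => ?_, fun k l => ?_⟩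
  · rw [dirDeriv_sum (by fun_prop)]
    exact abs_sum_le_card_mul fun i => (hF i).abs_dirDeriv_le k
  · rw [dirDeriv_dirDeriv_sum hFs]
    exact abs_sum_le_card_mul fun i => (hF i).abs_dirDeriv_dirDeriv_le k l

theorem inv_one_add (hG : HasJetBound e G p b₀ b₁ b₂) (hG0 : 0 ≤ G p) :
    HasJetBound e (fun q => (1 + G q)⁻¹) p 1 b₁ (b₂ + 2 * b₁ ^ 2) := by
  have hGs := hG.contDiffAt
  have hφ : ContDiffAt ℝ ∞ (fun y : ℝ => (1 + y)⁻¹) (G p) := contDiffAt_inv_one_add (by linarith)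
  have hr0 : 0 ≤ (1 + G p)⁻¹ := by positivity
  have hr1 : (1 + G p)⁻¹ ≤ 1 := inv_le_one_of_one_le₀ (by linarith)
  have hφ₁ : |deriv (fun y : ℝ => (1 + y)⁻¹) (G p)| ≤ 1 := by
    rw [deriv_inv_one_add (by linarith), abs_neg, abs_of_nonneg (by positivity)]
    exact pow_le_one₀ hr0 hr1
  have hφ₂ : |deriv (deriv fun y : ℝ => (1 + y)⁻¹) (G p)| ≤ 2 := by
    rw [deriv_deriv_inv_one_add (by linarith), abs_of_nonneg (by positivity)]
    linarith [pow_le_one₀ hr0 hr1 (n := 3)]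
  refine ⟨hφ.comp p hGs, by rwa [abs_of_nonneg hr0], fun k => ?_, fun k l => ?_⟩
  · rw [dirDeriv_comp (φ := fun y => (1 + y)⁻¹) (differentiableAt_of_contDiffAt_infty hφ)
      (by fun_prop), ← one_mul b₁]
    exact abs_mul_le_mul hφ₁ (hG.abs_dirDeriv_le k)
  · rw [dirDeriv_dirDeriv_comp (φ := fun y => (1 + y)⁻¹) hφ hGs]
    refine (abs_add_le _ _).trans (add_le_add ?_ ?_)
    · rw [← one_mul b₂]
      exact abs_mul_le_mul hφ₁ (hG.abs_dirDeriv_dirDeriv_le k l)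
    · rw [sq]
      exact abs_mul_le_mul hφ₂ (abs_mul_le_mul (hG.abs_dirDeriv_le k) (hG.abs_dirDeriv_le l))

end HasJetBound

end JetBounds

section HessianEvolution

variable {n : ℕ} {u : SpaceTime n → ℝ} {p : SpaceTime n}

/-- The squared Frobenius norm `|D²u|²` of the spatial Hessian. -/
noncomputable def hessSq (u : SpaceTime n → ℝ) (p : SpaceTime n) : ℝ :=
  ∑ k : Fin n × Fin n, ∂[k.1] (∂[k.2] u) p ^ 2

/-- The squared norm `|D³u|²` of the third spatial derivatives. -/
noncomputable def thirdSq (u : SpaceTime n → ℝ) (p : SpaceTime n) : ℝ :=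
  ∑ k : Fin n × Fin n, gradSq (∂[k.1] (∂[k.2] u)) p

theorem hessSq_nonneg (u : SpaceTime n → ℝ) (p : SpaceTime n) : 0 ≤ hessSq u p :=
  Finset.sum_nonneg fun _ _ => sq_nonneg _

theorem thirdSq_nonneg (u : SpaceTime n → ℝ) (p : SpaceTime n) : 0 ≤ thirdSq u p :=
  Finset.sum_nonneg fun _ _ => gradSq_nonneg _ _

@[fun_prop]
theorem contDiffAt_hessSq (hu : ContDiffAt ℝ ∞ u p) : ContDiffAt ℝ ∞ (hessSq u) p := by
  unfold hessSq
  fun_prop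

theorem sq_le_hessSq (u : SpaceTime n → ℝ) (p : SpaceTime n) (k : Fin n × Fin n) :
    ∂[k.1] (∂[k.2] u) p ^ 2 ≤ hessSq u p :=
  Finset.single_le_sum (f := fun k : Fin n × Fin n => ∂[k.1] (∂[k.2] u) p ^ 2)
    (fun _ _ => sq_nonneg _) (Finset.mem_univ k)

theorem sq_le_gradSq (u : SpaceTime n → ℝ) (p : SpaceTime n) (i : Fin n) :
    ∂[i] u p ^ 2 ≤ gradSq u p :=
  Finset.single_le_sum (f := fun i => ∂[i] u p ^ 2) (fun _ _ => sq_nonneg _) (Finset.mem_univ i)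

theorem gradSq_le_thirdSq (u : SpaceTime n → ℝ) (p : SpaceTime n) (k : Fin n × Fin n) :
    gradSq (∂[k.1] (∂[k.2] u)) p ≤ thirdSq u p :=
  Finset.single_le_sum (f := fun k : Fin n × Fin n => gradSq (∂[k.1] (∂[k.2] u)) p)
    (fun _ _ => gradSq_nonneg _ _) (Finset.mem_univ k)

theorem sq_le_thirdSq (u : SpaceTime n → ℝ) (p : SpaceTime n) (m k l : Fin n) :
    ∂[m] (∂[k] (∂[l] u)) p ^ 2 ≤ thirdSq u p :=
  (sq_le_gradSq (∂[k] (∂[l] u)) p m).trans (gradSq_le_thirdSq u p (k, l))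

theorem invAreaSq_mul_sum_gradSq_le {κ : Type*} [Fintype κ] (v : κ → SpaceTime n → ℝ) :
    invAreaSq u p * ∑ k, gradSq (v k) p ≤ gradEnergy (mcfCoeff u p) v p := by
  rw [Finset.mul_sum]
  refine Finset.sum_le_sum fun k _ => ?_
  rw [gradSq_eq_dotProduct]
  exact invAreaSq_mul_dotProduct_self_le _

theorem half_le_invAreaSq (hw : gradSq u p ≤ 1) : 1 / 2 ≤ invAreaSq u p := by
  rw [one_div]
  exact inv_anti₀ (one_add_gradSq_pos u p) (by linarith)

theorem hessSq_eq_sum_gradSq (u : SpaceTime n → ℝ) (p : SpaceTime n) :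
    hessSq u p = ∑ k, gradSq (∂[k] u) p :=
  Fintype.sum_prod_type_right _

theorem hasJetBound_partial (hu : ContDiffAt ℝ ∞ u p) (hw : gradSq u p ≤ 1) (i : Fin n) :
    HasJetBound spaceUnit (∂[i] u) p 1 √(hessSq u p) √(thirdSq u p) where
  contDiffAt := by fun_prop
  abs_le := (sq_le_one_iff_abs_le_one _).1 ((sq_le_gradSq u p i).trans hw)
  abs_dirDeriv_le k := Real.abs_le_sqrt (sq_le_hessSq u p (k, i))
  abs_dirDeriv_dirDeriv_le k l := Real.abs_le_sqrt (sq_le_thirdSq u p k l i)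

theorem hasJetBound_normalCoeff (hu : ContDiffAt ℝ ∞ u p) (hw : gradSq u p ≤ 1) (i j : Fin n) :
    HasJetBound spaceUnit (normalCoeff u i j) p 1 (2 * (n + 1) * √(hessSq u p))
      (10 * (n + 1) ^ 2 * (hessSq u p + √(thirdSq u p))) := by
  have hjet := hasJetBound_partial hu hw
  have hgradSq := HasJetBound.sum fun k => (hjet k).mul (hjet k)
  rw [show (fun q => ∑ k, ∂[k] u q * ∂[k] u q) = gradSq u by ext; simp only [gradSq, sq]] at hgradSq
  have hb := (hgradSq.inv_one_add (gradSq_nonneg u p)).mul ((hjet i).mul (hjet j))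
  have hS := Real.sqrt_nonneg (thirdSq u p)
  refine hb.mono (by norm_num) (by simp; linarith [Real.sqrt_nonneg (hessSq u p)]) ?_
  rw [Fintype.card_fin]
  have hB := hessSq_nonneg u p
  have hQ := Real.mul_self_sqrt hB
  generalize √(hessSq u p) = Q at hQ ⊢
  generalize √(thirdSq u p) = S at hS ⊢
  rw [← hQ]
  have hnS : 0 ≤ n * S := by positivity
  have hnnS : 0 ≤ n ^ 2 * S := by positivity
  have hnQ : 0 ≤ n * Q ^ 2 := by positivity
  have hnnQ : 0 ≤ n ^ 2 * Q ^ 2 := by positivity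
  linarith

theorem abs_parabolicOp_dirDeriv_dirDeriv_le (hu : IsGraphicalMCFAt u p) (hw : gradSq u p ≤ 1)
    (k l : Fin n) :
    |parabolicOp (mcfCoeff u p) (∂[k] (∂[l] u)) p| ≤
      14 * (n + 1) ^ 4 * (√(hessSq u p) * (hessSq u p + √(thirdSq u p))) := by
  have hb := hasJetBound_normalCoeff hu.contDiffAt hw
  set N : ℝ := n + 1
  have hN1 : 1 ≤ N := by simp [N]
  set Q := √(hessSq u p)
  set S := √(thirdSq u p)
  have hhess (i j : Fin n) : |∂[j] (∂[i] u) p| ≤ Q := Real.abs_le_sqrt (sq_le_hessSq u p (j, i))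
  have hthird (m i j : Fin n) : |∂[m] (∂[i] (∂[j] u)) p| ≤ S :=
    Real.abs_le_sqrt (sq_le_thirdSq u p m i j)
  have hterm (i j : Fin n) :
      |∂[k] (∂[l] (normalCoeff u i j)) p * ∂[j] (∂[i] u) p +
        ∂[l] (normalCoeff u i j) p * ∂[k] (∂[j] (∂[i] u)) p +
        ∂[k] (normalCoeff u i j) p * ∂[j] (∂[i] (∂[l] u)) p| ≤
      14 * N ^ 2 * (Q * (hessSq u p + S)) := by
    refine (abs_add_three _ _ _).trans ?_
    have h₁ := abs_mul_le_mul ((hb i j).abs_dirDeriv_dirDeriv_le k l) (hhess i j)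
    have h₂ := abs_mul_le_mul ((hb i j).abs_dirDeriv_le l) (hthird k j i)
    have h₃ := abs_mul_le_mul ((hb i j).abs_dirDeriv_le k) (hthird j i l)
    have hN : N * (Q * S) ≤ N ^ 2 * (Q * S) := by gcongr; nlinarith
    have hB : 0 ≤ N ^ 2 * (Q * hessSq u p) := by have := hessSq_nonneg u p; positivity
    linarith
  rw [hu.parabolicOp_dirDeriv_dirDeriv]
  refine (abs_sum_le_card_mul fun i => abs_sum_le_card_mul fun j => hterm i j).trans ?_
  have hnN : (n : ℝ) ≤ N := by simp [N]
  have hE : 0 ≤ Q * (hessSq u p + S) := by have := hessSq_nonneg u p; positivity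
  rw [Fintype.card_fin]
  calc (n : ℝ) * (n * (14 * N ^ 2 * (Q * (hessSq u p + S))))
      ≤ N * (N * (14 * N ^ 2 * (Q * (hessSq u p + S)))) := by gcongr
    _ = 14 * N ^ 4 * (Q * (hessSq u p + S)) := by ring

end HessianEvolution

section HessianEstimate

variable {n : ℕ} {u : SpaceTime n → ℝ} {p : SpaceTime n}

/-- The coefficient of the reaction term `|D²u|⁴` in the evolution of `|D²u|²` while `|Du| ≤ 1`;
its size is not optimal. -/
def hessReaction (n : ℕ) : ℝ :=
  420 * (n + 1) ^ 12

theorem two_le_hessReaction (n : ℕ) : 2 ≤ hessReaction n := by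
  have h : (1 : ℝ) ≤ (n + 1) ^ 12 := one_le_pow₀ (by simp)
  unfold hessReaction
  linarith

theorem abs_sum_mul_parabolicOp_le (hu : IsGraphicalMCFAt u p) (hw : gradSq u p ≤ 1) :
    |∑ k : Fin n × Fin n, ∂[k.1] (∂[k.2] u) p *
      parabolicOp (mcfCoeff u p) (∂[k.1] (∂[k.2] u)) p| ≤
      14 * (n + 1) ^ 6 * (hessSq u p * (hessSq u p + √(thirdSq u p))) := by
  have hB := hessSq_nonneg u p
  refine (abs_sum_le_card_mul fun k => abs_mul_le_mul (Real.abs_le_sqrt (sq_le_hessSq u p k))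
    (abs_parabolicOp_dirDeriv_dirDeriv_le hu hw k.1 k.2)).trans ?_
  calc (Fintype.card (Fin n × Fin n) : ℝ) * (√(hessSq u p) *
        (14 * (n + 1) ^ 4 * (√(hessSq u p) * (hessSq u p + √(thirdSq u p)))))
      = n ^ 2 * (14 * (n + 1) ^ 4 *
          (√(hessSq u p) * √(hessSq u p) * (hessSq u p + √(thirdSq u p)))) := by
        rw [Fintype.card_prod, Fintype.card_fin]
        push_cast
        ring
    _ ≤ (n + 1) ^ 2 * (14 * (n + 1) ^ 4 *
          (√(hessSq u p) * √(hessSq u p) * (hessSq u p + √(thirdSq u p)))) := by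
        gcongr
        linarith
    _ = 14 * (n + 1) ^ 6 * (hessSq u p * (hessSq u p + √(thirdSq u p))) := by
        rw [Real.mul_self_sqrt hB]
        ring

theorem gradEnergy_sub_le_parabolicOp_hessSq (hu : IsGraphicalMCFAt u p)
    (hw : gradSq u p ≤ 1) :
    gradEnergy (mcfCoeff u p) (fun k : Fin n × Fin n => ∂[k.1] (∂[k.2] u)) p -
      hessReaction n * hessSq u p ^ 2 ≤ parabolicOp (mcfCoeff u p) (hessSq u) p := by
  have hsmooth := hu.contDiffAt
  have hT := thirdSq_nonneg u p
  have hthird : thirdSq u p / 2 ≤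
      gradEnergy (mcfCoeff u p) (fun k : Fin n × Fin n => ∂[k.1] (∂[k.2] u)) p := by
    refine le_trans ?_ (invAreaSq_mul_sum_gradSq_le fun k : Fin n × Fin n => ∂[k.1] (∂[k.2] u))
    change _ ≤ invAreaSq u p * thirdSq u p
    linarith [mul_le_mul_of_nonneg_right (half_le_invAreaSq hw) hT]
  have hreaction := (abs_le.1 (abs_sum_mul_parabolicOp_le hu hw)).1
  have hyoung : 28 * (n + 1) ^ 6 * (hessSq u p * (hessSq u p + √(thirdSq u p))) ≤
      thirdSq u p / 2 + hessReaction n * hessSq u p ^ 2 := by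
    have hN : ((n : ℝ) + 1) ^ 6 ≤ (n + 1) ^ 12 := pow_le_pow_right₀ (by simp) (by norm_num)
    have hsq := sq_nonneg (√(thirdSq u p) - 28 * (n + 1) ^ 6 * hessSq u p)
    rw [sub_sq, Real.sq_sqrt hT] at hsq
    unfold hessReaction
    linarith [mul_le_mul_of_nonneg_right hN (sq_nonneg (hessSq u p))]
  have hevol : parabolicOp (mcfCoeff u p) (hessSq u) p = _ :=
    parabolicOp_sum_sq (v := fun k : Fin n × Fin n => ∂[k.1] (∂[k.2] u)) (by fun_prop)
  rw [hevol]
  linarith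

theorem spatialGrad_hessSq_form_le (hu : ContDiffAt ℝ ∞ u p) :
    spatialGrad (hessSq u) p ⬝ᵥ mcfCoeff u p *ᵥ spatialGrad (hessSq u) p ≤ 4 * hessSq u p *
      gradEnergy (mcfCoeff u p) (fun k : Fin n × Fin n => ∂[k.1] (∂[k.2] u)) p :=
  spatialGrad_sum_sq_form_le (isSubunit_mcfCoeff u p).posSemidef (by fun_prop)

theorem half_hessSq_le_gradEnergy (hw : gradSq u p ≤ 1) :
    hessSq u p / 2 ≤ gradEnergy (mcfCoeff u p) (fun k => ∂[k] u) p := by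
  refine le_trans ?_ (invAreaSq_mul_sum_gradSq_le fun k => ∂[k] u)
  rw [← hessSq_eq_sum_gradSq]
  linarith [mul_le_mul_of_nonneg_right (half_le_invAreaSq hw) (hessSq_nonneg u p)]

/-- The bound on `|Du|²` under which the good term `|D²u|⁴` produced by `|Du|²|D²u|²` dominates the
reaction term in the evolution of `|D²u|²`. -/
noncomputable def smallGradSq (n : ℕ) : ℝ :=
  1 / (128 * hessReaction n)

theorem smallGradSq_pos (n : ℕ) : 0 < smallGradSq n := by
  have := two_le_hessReaction n
  unfold smallGradSq
  positivity

theorem smallGradSq_mul_hessReaction (n : ℕ) : smallGradSq n * hessReaction n = 1 / 128 := by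
  have := two_le_hessReaction n
  unfold smallGradSq
  field_simp

theorem smallGradSq_le (n : ℕ) : smallGradSq n ≤ 1 / 256 := by
  have hδ := smallGradSq_pos n
  nlinarith [two_le_hessReaction n, smallGradSq_mul_hessReaction n]

theorem neg_le_two_mul_spatialGrad_hessSq_form {δ : ℝ} (hu : ContDiffAt ℝ ∞ u p) (hδ : 0 < δ)
    (hw : gradSq u p ≤ δ) (hB : 0 < hessSq u p) :
    -(16 * δ * gradEnergy (mcfCoeff u p) (fun k : Fin n × Fin n => ∂[k.1] (∂[k.2] u)) p +
      hessSq u p * gradEnergy (mcfCoeff u p) (fun k => ∂[k] u) p) ≤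
      2 * (spatialGrad (hessSq u) p ⬝ᵥ mcfCoeff u p *ᵥ spatialGrad (gradSq u) p) := by
  have ha := (isSubunit_mcfCoeff u p).posSemidef
  have hsquare := dotProduct_mulVec_self_nonneg ha
    ((4 * δ) • spatialGrad (hessSq u) p + hessSq u p • spatialGrad (gradSq u) p)
  simp only [Matrix.mulVec_add, Matrix.mulVec_smul, add_dotProduct, dotProduct_add,
    smul_dotProduct, dotProduct_smul, smul_eq_mul,
    dotProduct_mulVec_comm ha (spatialGrad (gradSq u) p)] at hsquare
  have hE₂ := gradEnergy_nonneg (v := fun k => ∂[k] u) (p := p) ha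
  have hhess := mul_le_mul_of_nonneg_left (spatialGrad_hessSq_form_le hu) (sq_nonneg (4 * δ))
  have hgrad := mul_le_mul_of_nonneg_left (spatialGrad_gradSq_form_le hu) (sq_nonneg (hessSq u p))
  have hsmall := mul_le_mul_of_nonneg_right hw (mul_nonneg (sq_nonneg (hessSq u p)) hE₂)
  refine le_of_mul_le_mul_left ?_ (by positivity : 0 < 4 * δ * hessSq u p)
  linarith

theorem IsGraphicalMCFAt.riccati_hessSq (hu : IsGraphicalMCFAt u p)
    (hw : gradSq u p ≤ smallGradSq n) (hB : 0 < hessSq u p) :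
    hessSq u p ^ 2 / 4 ≤ parabolicOp (mcfCoeff u p)
      (fun q => 16 * smallGradSq n * hessSq u q + hessSq u q * gradSq u q) p := by
  have hsmooth := hu.contDiffAt
  have hδ := smallGradSq_pos n
  have hδK := smallGradSq_mul_hessReaction n
  have hw1 : gradSq u p ≤ 1 := by linarith [smallGradSq_le n]
  have hw0 := gradSq_nonneg u p
  have ha := (isSubunit_mcfCoeff u p).posSemidef
  rw [parabolicOp_add (by fun_prop) (by fun_prop), parabolicOp_const_mul _ (by fun_prop),
    parabolicOp_mul ha (by fun_prop) (by fun_prop)]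
  have hcross := neg_le_two_mul_spatialGrad_hessSq_form hsmooth hδ hw hB
  have hhess := mul_le_mul_of_nonneg_left (gradEnergy_sub_le_parabolicOp_hessSq hu hw1)
    (by positivity : 0 ≤ 16 * smallGradSq n + gradSq u p)
  have hgrad := mul_le_mul_of_nonneg_left hu.two_mul_gradEnergy_le hB.le
  have hgood := mul_le_mul_of_nonneg_left (half_hessSq_le_gradEnergy hw1) hB.le
  have hE₃ := mul_nonneg hw0
    (gradEnergy_nonneg (v := fun k : Fin n × Fin n => ∂[k.1] (∂[k.2] u)) (p := p) ha)
  have hK : 0 ≤ hessReaction n * hessSq u p ^ 2 := by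
    have := two_le_hessReaction n
    positivity
  have hreaction : (16 * smallGradSq n + gradSq u p) * (hessReaction n * hessSq u p ^ 2) ≤
      17 / 128 * hessSq u p ^ 2 := by
    calc (16 * smallGradSq n + gradSq u p) * (hessReaction n * hessSq u p ^ 2)
        ≤ (17 * smallGradSq n) * (hessReaction n * hessSq u p ^ 2) := by gcongr; linarith
      _ = 17 * (smallGradSq n * hessReaction n) * hessSq u p ^ 2 := by ring
      _ = 17 / 128 * hessSq u p ^ 2 := by rw [hδK]; ring
  linarith [sq_nonneg (hessSq u p)]

theorem hessSq_le_smoothingRate {x₀ : EuclideanSpace ℝ (Fin n)} {s T R : ℝ} (hR : 0 < R)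
    (hsT : s < T) (hu : ∀ p ∈ parabolicCylinder s T x₀ R, IsGraphicalMCFAt u p)
    (hw : ∀ p ∈ parabolicCylinder s T x₀ R, gradSq u p ≤ smallGradSq n) :
    hessSq u (T, x₀) ≤ smoothingRate n (T - s) R := by
  have hδ := smallGradSq_pos n
  have hrate := smoothingRate_pos n (sub_pos.2 hsT) R
  have bound := le_of_riccati
    (F := fun q => 16 * smallGradSq n * hessSq u q + hessSq u q * gradSq u q)
    (a := mcfCoeff u) (c := 1 / (32 * smallGradSq n) ^ 2 / 4) hR hsT (by positivity)
    (fun p hp => by have := (hu p hp).contDiffAt; fun_prop)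
    (fun p _ => isSubunit_mcfCoeff u p) (fun p hp hF => ?_)
  · have hB := hessSq_nonneg u (T, x₀)
    have hcross := mul_nonneg hB (gradSq_nonneg u (T, x₀))
    rw [le_div_iff₀ (by positivity), div_div, mul_one_div, div_le_iff₀ (by positivity)] at bound
    refine le_of_mul_le_mul_left ?_ (by positivity : 0 < 16 * smallGradSq n)
    nlinarith [smallGradSq_le n, mul_pos hδ hrate]
  · have hw0 := gradSq_nonneg u p
    have hB : 0 < hessSq u p := by
      refine (hessSq_nonneg u p).lt_of_ne fun h => ?_
      simp [← h] at hF
    refine le_trans ?_ ((hu p hp).riccati_hessSq (hw p hp) hB)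
    have hle : 16 * smallGradSq n * hessSq u p + hessSq u p * gradSq u p ≤
        32 * smallGradSq n * hessSq u p := by
      nlinarith [hw p hp]
    rw [div_mul_eq_mul_div, one_div_mul_eq_div]
    gcongr
    rw [div_le_iff₀ (by positivity), ← mul_pow, mul_comm (hessSq u p) (32 * smallGradSq n)]
    gcongr

end HessianEstimate

section GraphEstimates

variable {n : ℕ} {u : SpaceTime n → ℝ} {p : SpaceTime n} {s T R : ℝ}
  {x₀ : EuclideanSpace ℝ (Fin n)}

theorem abs_le_of_abs_le_bottom {H₀ H₁ : ℝ} (hR : 0 < R) (hsT : s ≤ T) (hH₀ : 0 ≤ H₀)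
    (hH₁ : 0 < H₁) (hu : ∀ p ∈ parabolicCylinder s T x₀ R, IsGraphicalMCFAt u p)
    (bottom : ∀ x ∈ closedBall x₀ R, |u (s, x)| ≤ H₀)
    (bound : ∀ p ∈ parabolicCylinder s T x₀ R, |u p| ≤ H₁) :
    |u (T, x₀)| ≤ H₀ + (2 * n + 1) / R ^ 2 * (T - s) * H₁ := by
  have ha (p) (_ : p ∈ parabolicCylinder s T x₀ R) := isSubunit_mcfCoeff u p
  refine abs_le'.2 ⟨?_, ?_⟩
  · exact subsolution_le_of_le_bottom hR hsT hH₀ hH₁ (fun p hp => (hu p hp).contDiffAt) ha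
      (fun p hp => (hu p hp).parabolicOp_eq_zero.ge)
      (fun x hx => (le_abs_self _).trans (bottom x hx))
      (fun p hp => (le_abs_self _).trans (bound p hp))
  · rw [neg_eq_neg_one_mul]
    refine subsolution_le_of_le_bottom (G := fun q => -1 * u q) hR hsT hH₀ hH₁
      (fun p hp => by have := (hu p hp).contDiffAt; fun_prop) ha (fun p hp => ?_)
      (fun x hx => ?_) (fun p hp => ?_)
    · rw [parabolicOp_const_mul _ (hu p hp).contDiffAt, (hu p hp).parabolicOp_eq_zero, mul_zero]
    · rw [neg_one_mul]
      exact (neg_le_abs _).trans (bottom x hx)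
    · rw [neg_one_mul]
      exact (neg_le_abs _).trans (bound p hp)

theorem contDiffAt_one_add_rpow {x : ℝ} (c : ℝ) (hx : 0 < 1 + x) :
    ContDiffAt ℝ ∞ (fun y : ℝ => (1 + y) ^ c) x :=
  ContDiffAt.rpow_const_of_ne (by fun_prop) hx.ne'

theorem deriv_one_add_rpow (c x : ℝ) :
    deriv (fun y : ℝ => (1 + y) ^ c) x = c * (1 + x) ^ (c - 1) := by
  rw [deriv_comp_const_add (fun y : ℝ => y ^ c), Real.deriv_rpow_const]

theorem deriv_deriv_one_add_rpow (c x : ℝ) :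
    deriv (deriv fun y : ℝ => (1 + y) ^ c) x = c * ((c - 1) * (1 + x) ^ (c - 1 - 1)) := by
  rw [funext (deriv_one_add_rpow c), deriv_const_mul_field, deriv_one_add_rpow]

theorem IsGraphicalMCFAt.three_mul_spatialGrad_gradSq_form_le (hu : IsGraphicalMCFAt u p) :
    3 * (spatialGrad (gradSq u) p ⬝ᵥ mcfCoeff u p *ᵥ spatialGrad (gradSq u) p) ≤
      2 * (1 + gradSq u p) * parabolicOp (mcfCoeff u p) (gradSq u) p := by
  have hq := spatialGrad_gradSq_form_le hu.contDiffAt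
  have hE := gradEnergy_nonneg (v := fun k => ∂[k] u) (p := p) (isSubunit_mcfCoeff u p).posSemidef
  rw [hu.parabolicOp_gradSq]
  linear_combination hq + 4 * hE - 2 * (spatialGrad (gradSq u) p ⬝ᵥ mcfCoeff u p *ᵥ
    spatialGrad (gradSq u) p) * invAreaSq_mul_one_add_gradSq u p

theorem IsGraphicalMCFAt.parabolicOp_one_add_gradSq_rpow_nonpos (hu : IsGraphicalMCFAt u p) :
    parabolicOp (mcfCoeff u p) (fun q => (1 + gradSq u q) ^ (-(1 / 2) : ℝ)) p ≤ 0 := by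
  have hw := one_add_gradSq_pos u p
  have hsmooth := hu.contDiffAt
  rw [parabolicOp_comp (φ := fun y => (1 + y) ^ (-(1 / 2) : ℝ)) (contDiffAt_one_add_rpow _ hw)
    (by fun_prop), deriv_one_add_rpow, deriv_deriv_one_add_rpow]
  have hpow : (1 + gradSq u p) ^ (-(1 / 2) - 1 : ℝ) =
      (1 + gradSq u p) ^ (-(1 / 2) - 1 - 1 : ℝ) * (1 + gradSq u p) := by
    rw [← Real.rpow_add_one hw.ne', sub_add_cancel]
  have h := mul_le_mul_of_nonneg_left hu.three_mul_spatialGrad_gradSq_form_le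
    (Real.rpow_nonneg hw.le (-(1 / 2) - 1 - 1))
  rw [hpow]
  linarith

theorem one_add_gradSq_le {K : ℝ} (hR : 0 < R) (hsT : s ≤ T)
    (hshort : (2 * n + 1) * (T - s) ≤ R ^ 2 / 2)
    (hu : ∀ p ∈ parabolicCylinder s T x₀ R, IsGraphicalMCFAt u p)
    (bottom : ∀ x ∈ closedBall x₀ R, gradSq u (s, x) ≤ K) :
    1 + gradSq u (T, x₀) ≤ 4 * (1 + K) := by
  have hK : 0 < 1 + K := by
    linarith [bottom x₀ (mem_closedBall_self hR.le), gradSq_nonneg u (s, x₀)]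
  set ν₀ : ℝ := (1 + K) ^ (-(1 / 2) : ℝ) with hν₀
  have hν₀_pos : 0 < ν₀ := Real.rpow_pos_of_pos hK _
  have barrier := subsolution_le_of_le_bottom (x₀ := x₀) (H₀ := 0) (a := mcfCoeff u)
    (G := fun q => ν₀ + -1 * (1 + gradSq u q) ^ (-(1 / 2) : ℝ)) hR hsT le_rfl hν₀_pos
    (fun p hp => ?smooth) (fun p _ => isSubunit_mcfCoeff u p) (fun p hp => ?subsolution)
    (fun x hx => ?bottom) (fun p _ => ?bound)
  case smooth =>
    have hG := (hu p hp).contDiffAt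
    exact contDiffAt_const.add (contDiffAt_const.mul
      ((contDiffAt_one_add_rpow _ (one_add_gradSq_pos u p)).comp p (by fun_prop)))
  case subsolution =>
    have hG := (hu p hp).contDiffAt
    have hF : ContDiffAt ℝ ∞ (fun q => (1 + gradSq u q) ^ (-(1 / 2) : ℝ)) p :=
      (contDiffAt_one_add_rpow _ (one_add_gradSq_pos u p)).comp p (by fun_prop)
    rw [parabolicOp_add contDiffAt_const (contDiffAt_const.mul hF), parabolicOp_const,
      parabolicOp_const_mul _ hF]
    linarith [(hu p hp).parabolicOp_one_add_gradSq_rpow_nonpos]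
  case bottom =>
    have h := Real.rpow_le_rpow_of_nonpos (one_add_gradSq_pos u (s, x))
      (add_le_add_right (bottom x hx) 1) (by norm_num : -(1 / 2) ≤ (0 : ℝ))
    linarith
  case bound =>
    have h := Real.rpow_nonneg (one_add_gradSq_pos u p).le (-(1 / 2))
    linarith
  have hfrac : (2 * n + 1) / R ^ 2 * (T - s) ≤ 1 / 2 := by
    rw [div_mul_eq_mul_div, div_le_iff₀ (by positivity)]
    linarith
  have hhalf : (4 * (1 + K)) ^ (-(1 / 2) : ℝ) = 1 / 2 * ν₀ := by
    rw [Real.mul_rpow (by norm_num) hK.le, show (4 : ℝ) = 2 ^ (2 : ℝ) by norm_num,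
      ← Real.rpow_mul zero_le_two]
    norm_num [hν₀]
  refine (Real.rpow_le_rpow_iff_of_neg (by positivity) (one_add_gradSq_pos u (T, x₀))
    (by norm_num : -(1 / 2) < (0 : ℝ))).1 ?_
  rw [hhalf]
  linarith [mul_le_mul_of_nonneg_right hfrac hν₀_pos.le]

theorem gradSq_le_smoothingRate_mul {K H : ℝ} (hR : 0 < R) (hsT : s < T)
    (hu : ∀ p ∈ parabolicCylinder s T x₀ R, IsGraphicalMCFAt u p)
    (hw : ∀ p ∈ parabolicCylinder s T x₀ R, gradSq u p ≤ K)
    (hH : ∀ p ∈ parabolicCylinder s T x₀ R, |u p| ≤ H) :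
    gradSq u (T, x₀) ≤ smoothingRate n (T - s) R * ((1 + K) * H ^ 2) := by
  have hK : 0 < 1 + K := by
    linarith [hw _ (mem_parabolicCylinder_center hR.le hsT.le), gradSq_nonneg u (T, x₀)]
  have h := le_of_strict_subsolution_comparison (F := gradSq u) (G := fun q => u q ^ 2)
    (a := mcfCoeff u) (H := H ^ 2) hR hsT (inv_pos.2 hK)
    (fun p hp => by have := (hu p hp).contDiffAt; fun_prop)
    (fun p hp => by have := (hu p hp).contDiffAt; fun_prop)
    (fun p _ => isSubunit_mcfCoeff u p) (fun p _ => gradSq_nonneg u p)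
    (fun p hp _ => (hu p hp).spatialGrad_gradSq_form_le_parabolicOp) (sq_nonneg _)
    (fun p hp => sq_le_sq.2 ((hH p hp).trans (le_abs_self H))) (fun p hp hpos => ?_)
  · rwa [div_inv_eq_mul, mul_comm (H ^ 2)] at h
  · have hr : (1 + K)⁻¹ ≤ invAreaSq u p :=
      inv_anti₀ (one_add_gradSq_pos u p) (by linarith [hw p hp])
    rw [parabolicOp_sq (hu p hp).contDiffAt, (hu p hp).parabolicOp_eq_zero,
      spatialGrad_form_mcfCoeff]
    nlinarith [mul_le_mul_of_nonneg_right hr hpos.le, mul_pos (inv_pos.2 hK) hpos]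

end GraphEstimates

section InteriorDecay

variable {n : ℕ} {u : SpaceTime n → ℝ} {a₀ : EuclideanSpace ℝ (Fin n)} {ρ t₁ s T l r r' : ℝ}

theorem parabolicCylinder_subset {s' T' : ℝ} {x : EuclideanSpace ℝ (Fin n)} (hs : s' ≤ s)
    (hT : T ≤ T') (hx : r + dist x a₀ ≤ r') :
    parabolicCylinder s T x r ⊆ parabolicCylinder s' T' a₀ r' :=
  prod_mono (Icc_subset_Icc hs hT) (closedBall_subset_closedBall' hx)

/-- The constant `C` in the height bound `|u| ≤ C (t - t₁) / ρ`. -/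
noncomputable def heightConst (n : ℕ) : ℝ := 256 * n + 130

/-- The constant `C` in the Hessian bound `|D²u|² ≤ C / (t - t₁)`. -/
noncomputable def hessianConst (n : ℕ) : ℝ := 2 + 64 * (4 * n + 24)

/-- The constant `C` in the gradient bound `|Du|² ≤ (1 + K) C (t - t₁) / ρ²` for flows with
`|Du|² ≤ K`. -/
noncomputable def gradientConst (n : ℕ) : ℝ := hessianConst n * heightConst n ^ 2

/-- The time, in units of `ρ²`, for which a gradient bound persists up to a factor. -/
noncomputable def shortTime (n : ℕ) : ℝ := 1 / (128 * (2 * n + 1))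

theorem one_lt_heightConst (n : ℕ) : 1 < heightConst n := by
  have : (0 : ℝ) ≤ n := n.cast_nonneg
  unfold heightConst
  linarith

theorem hessianConst_pos (n : ℕ) : 0 < hessianConst n := by
  unfold hessianConst
  positivity

theorem gradientConst_pos (n : ℕ) : 0 < gradientConst n :=
  mul_pos (hessianConst_pos n) (pow_pos (zero_lt_one.trans (one_lt_heightConst n)) 2)

theorem shortTime_pos (n : ℕ) : 0 < shortTime n := by
  unfold shortTime
  positivity

theorem shortTime_lt_one (n : ℕ) : shortTime n < 1 := by
  have : (0 : ℝ) ≤ n := n.cast_nonneg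
  rw [shortTime, div_lt_one (by positivity)]
  linarith

theorem smoothingRate_half_le {D : ℝ} (hD : 0 < D) (hDρ : D ≤ ρ ^ 2) :
    smoothingRate n (D / 2) (ρ / 8) ≤ hessianConst n / D := by
  calc smoothingRate n (D / 2) (ρ / 8) = 2 / D + 64 * (4 * n + 24) / ρ ^ 2 := by
        rw [smoothingRate, one_div_div, div_pow, div_div_eq_mul_div]
        ring
    _ ≤ 2 / D + 64 * (4 * n + 24) / D := by gcongr
    _ = hessianConst n / D := (add_div _ _ _).symm

theorem one_add_gradSq_le_on_parabolicCylinder {K : ℝ} (hρ : 0 < ρ)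
    (hshort : T - s ≤ shortTime n * ρ ^ 2) (hr : ρ / 8 + r ≤ r')
    (hu : ∀ p ∈ parabolicCylinder s T a₀ r', IsGraphicalMCFAt u p)
    (bottom : ∀ x ∈ closedBall a₀ r', gradSq u (s, x) ≤ K) :
    ∀ p ∈ parabolicCylinder s T a₀ r, 1 + gradSq u p ≤ 4 * (1 + K) := by
  rintro ⟨t, x⟩ ⟨⟨hst, htT⟩, hx : dist x a₀ ≤ r⟩
  have hx' : ρ / 8 + dist x a₀ ≤ r' := by linarith
  refine one_add_gradSq_le (R := ρ / 8) (by positivity) hst ?_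
    (fun p hp => hu p (parabolicCylinder_subset le_rfl htT hx' hp))
    (fun y hy => bottom y (closedBall_subset_closedBall' hx' hy))
  calc (2 * n + 1) * (t - s) ≤ (2 * n + 1) * (shortTime n * ρ ^ 2) := by gcongr; linarith
    _ = (ρ / 8) ^ 2 / 2 := by
        rw [shortTime]
        field_simp
        norm_num

theorem gradSq_le_elapsedTime_on_parabolicCylinder {K : ℝ} (hρ : 0 < ρ) (hl : 0 < l)
    (hTρ : T - t₁ ≤ ρ ^ 2) (hr : ρ / 8 + r ≤ r')
    (hu : ∀ p ∈ parabolicCylinder (t₁ + l) T a₀ r', IsGraphicalMCFAt u p)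
    (hw : ∀ p ∈ parabolicCylinder (t₁ + l) T a₀ r', 1 + gradSq u p ≤ K)
    (hH : ∀ p ∈ parabolicCylinder (t₁ + l) T a₀ r', |u p| ≤ heightConst n * ((p.1 - t₁) / ρ)) :
    ∀ p ∈ parabolicCylinder (t₁ + 2 * l) T a₀ r,
      gradSq u p ≤ K * gradientConst n * ((p.1 - t₁) / ρ ^ 2) := by
  rintro ⟨t, x⟩ ⟨⟨hst, htT⟩, hx : dist x a₀ ≤ r⟩
  have hD : 0 < t - t₁ := by linarith
  have hsub : parabolicCylinder ((t₁ + t) / 2) t x (ρ / 8) ⊆ parabolicCylinder (t₁ + l) T a₀ r' :=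
    parabolicCylinder_subset (by linarith) htT (by linarith)
  have hK : 0 < K := (one_add_gradSq_pos u (t, x)).trans_le
    (hw _ (hsub (mem_parabolicCylinder_center (by positivity) (by linarith))))
  have hheight : 0 < heightConst n := zero_lt_one.trans (one_lt_heightConst n)
  have h := gradSq_le_smoothingRate_mul (H := heightConst n * ((t - t₁) / ρ)) (by positivity)
    (by linarith) (fun p hp => hu p (hsub hp)) (fun p hp => le_sub_iff_add_le'.2 (hw p (hsub hp)))
    (fun p hp => (hH p (hsub hp)).trans (by gcongr; exact hp.1.2))
  rw [show t - (t₁ + t) / 2 = (t - t₁) / 2 by ring, add_sub_cancel] at h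
  calc gradSq u (t, x)
      ≤ hessianConst n / (t - t₁) * (K * (heightConst n * ((t - t₁) / ρ)) ^ 2) :=
        h.trans (mul_le_mul_of_nonneg_right (smoothingRate_half_le hD (by linarith))
          (by positivity))
    _ = K * gradientConst n * ((t - t₁) / ρ ^ 2) := by
        rw [gradientConst]
        field_simp

theorem hessSq_le_on_parabolicCylinder (hρ : 0 < ρ) (hl : 0 < l) (hTρ : T - t₁ ≤ ρ ^ 2)
    (hr : ρ / 8 + r ≤ r')
    (hu : ∀ p ∈ parabolicCylinder (t₁ + l) T a₀ r', IsGraphicalMCFAt u p)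
    (hw : ∀ p ∈ parabolicCylinder (t₁ + l) T a₀ r', gradSq u p ≤ smallGradSq n) :
    ∀ p ∈ parabolicCylinder (t₁ + 2 * l) T a₀ r, hessSq u p ≤ hessianConst n / (p.1 - t₁) := by
  rintro ⟨t, x⟩ ⟨⟨hst, htT⟩, hx : dist x a₀ ≤ r⟩
  have hsub : parabolicCylinder ((t₁ + t) / 2) t x (ρ / 8) ⊆ parabolicCylinder (t₁ + l) T a₀ r' :=
    parabolicCylinder_subset (by linarith) htT (by linarith)
  have h := hessSq_le_smoothingRate (s := (t₁ + t) / 2) (T := t) (R := ρ / 8) (by positivity)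
    (by linarith) (fun p hp => hu p (hsub hp)) (fun p hp => hw p (hsub hp))
  rw [show t - (t₁ + t) / 2 = (t - t₁) / 2 by ring] at h
  exact h.trans (smoothingRate_half_le (by linarith) (by linarith))

/-- A graphical mean curvature flow on `[s, T] × closedBall a₀ (15/8 ρ)` which at its initial time
has height `O(l / ρ)` and squared gradient at most `Λ`. The estimates refer to an earlier time
`t₁`, at which smoothness may hold only from one side, and begin after multiples of the waiting
time `l`. -/
structure IsSlabFlow (u : SpaceTime n → ℝ) (a₀ : EuclideanSpace ℝ (Fin n)) (ρ t₁ s T l Λ : ℝ) :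
    Prop where
  lt_start : t₁ < s
  start_le : s ≤ t₁ + l
  isGraphicalMCFAt : ∀ p ∈ parabolicCylinder s T a₀ (15 / 8 * ρ), IsGraphicalMCFAt u p
  abs_le : ∀ p ∈ parabolicCylinder s T a₀ (15 / 8 * ρ), |u p| ≤ 2 * ρ
  abs_start_le : ∀ x ∈ closedBall a₀ (15 / 8 * ρ), |u (s, x)| ≤ 2 * l / ρ
  gradSq_start_le : ∀ x ∈ closedBall a₀ (15 / 8 * ρ), gradSq u (s, x) ≤ Λ

namespace IsSlabFlow

variable {Λ t : ℝ}

theorem waitingTime_pos (h : IsSlabFlow u a₀ ρ t₁ s T l Λ) : 0 < l := by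
  linarith [h.lt_start, h.start_le]

theorem isGraphicalMCFAt_of_le (h : IsSlabFlow u a₀ ρ t₁ s T l Λ) (hs : t₁ + l ≤ t)
    (hr : r ≤ 15 / 8 * ρ) : ∀ p ∈ parabolicCylinder t T a₀ r, IsGraphicalMCFAt u p :=
  fun p hp => h.isGraphicalMCFAt p
    (parabolicCylinder_subset (h.start_le.trans hs) le_rfl (by simpa using hr) hp)

theorem abs_le_elapsedTime (h : IsSlabFlow u a₀ ρ t₁ s T l Λ) (hρ : 0 < ρ) :
    ∀ p ∈ parabolicCylinder (t₁ + l) T a₀ (14 / 8 * ρ),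
      |u p| ≤ heightConst n * ((p.1 - t₁) / ρ) := by
  rintro ⟨t, x⟩ ⟨⟨hst, htT⟩, hx : dist x a₀ ≤ 14 / 8 * ρ⟩
  have hx' : ρ / 8 + dist x a₀ ≤ 15 / 8 * ρ := by linarith
  have hsub := parabolicCylinder_subset (s := s) le_rfl htT hx'
  have hst' : s ≤ t := h.start_le.trans hst
  have hl := h.waitingTime_pos
  refine (abs_le_of_abs_le_bottom (by positivity) hst' (by positivity) (by positivity)
    (fun p hp => h.isGraphicalMCFAt p (hsub hp))
    (fun y hy => h.abs_start_le y (closedBall_subset_closedBall' hx' hy))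
    (fun p hp => h.abs_le p (hsub hp))).trans ?_
  calc 2 * l / ρ + (2 * n + 1) / (ρ / 8) ^ 2 * (t - s) * (2 * ρ)
      = (2 * l + 128 * (2 * n + 1) * (t - s)) / ρ := by
        field_simp
        ring
    _ ≤ (2 * (t - t₁) + 128 * (2 * n + 1) * (t - t₁)) / ρ := by
        gcongr
        · linarith
        · exact h.lt_start.le
    _ = heightConst n * ((t - t₁) / ρ) := by
        rw [heightConst]
        ring

theorem gradSq_le_one (h : IsSlabFlow u a₀ ρ t₁ s T l Λ) (hρ : 0 < ρ)
    (hT : T - t₁ ≤ shortTime n * ρ ^ 2) :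
    ∀ p ∈ parabolicCylinder (t₁ + 2 * l) T a₀ (13 / 8 * ρ),
      4 * (1 + Λ) * gradientConst n * (p.1 - t₁) ≤ ρ ^ 2 → gradSq u p ≤ 1 := by
  intro p hp hearly
  have hpersist := one_add_gradSq_le_on_parabolicCylinder (r := 14 / 8 * ρ) hρ
    (by linarith [h.lt_start]) (by linarith) h.isGraphicalMCFAt h.gradSq_start_le
  have hdecay := gradSq_le_elapsedTime_on_parabolicCylinder hρ h.waitingTime_pos
    (hT.trans (mul_le_of_le_one_left (sq_nonneg ρ) (shortTime_lt_one n).le)) (by linarith)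
    (h.isGraphicalMCFAt_of_le le_rfl (by linarith))
    (fun q hq => hpersist q (parabolicCylinder_subset h.start_le le_rfl (by simp) hq))
    (h.abs_le_elapsedTime hρ) p hp
  rw [← mul_div_assoc] at hdecay
  exact hdecay.trans (div_le_one_of_le₀ hearly (sq_nonneg ρ))

theorem one_add_gradSq_le_eight (h : IsSlabFlow u a₀ ρ t₁ s T l Λ) (hρ : 0 < ρ)
    (hT : T - t₁ ≤ shortTime n * ρ ^ 2)
    (hlρ : 4 * (1 + Λ) * gradientConst n * (2 * l) ≤ ρ ^ 2) :
    ∀ p ∈ parabolicCylinder (t₁ + 2 * l) T a₀ (12 / 8 * ρ), 1 + gradSq u p ≤ 8 := by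
  intro p hp
  have hl := h.waitingTime_pos
  have hsmall := h.gradSq_le_one hρ hT
  have hΛ : 0 ≤ Λ := (gradSq_nonneg u (s, a₀)).trans
    (h.gradSq_start_le a₀ (mem_closedBall_self (by positivity)))
  set c := 4 * (1 + Λ) * gradientConst n
  have hc_pos : 0 < c := mul_pos (by positivity) (gradientConst_pos n)
  have hlc : 2 * l ≤ ρ ^ 2 / c := (le_div_iff₀' hc_pos).2 hlρ
  rcases le_total (p.1 - t₁) (ρ ^ 2 / c) with hearly | hlate
  · linarith [hsmall p (parabolicCylinder_subset le_rfl le_rfl (by simp; linarith) hp)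
      ((le_div_iff₀' hc_pos).1 hearly)]
  · have hpersist := one_add_gradSq_le_on_parabolicCylinder (s := t₁ + ρ ^ 2 / c) (T := T)
      (r := 12 / 8 * ρ) (r' := 13 / 8 * ρ) (K := 1) hρ (by linarith) (by linarith)
      (h.isGraphicalMCFAt_of_le (by linarith) (by linarith))
      (fun x hx => hsmall _ ⟨⟨by linarith, by linarith [hp.1.2]⟩, hx⟩
        (by rw [add_sub_cancel_left, mul_div_cancel₀ _ hc_pos.ne']))
      p ⟨⟨by linarith, hp.1.2⟩, hp.2⟩
    linarith

theorem gradSq_le_elapsedTime (h : IsSlabFlow u a₀ ρ t₁ s T l Λ) (hρ : 0 < ρ)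
    (hT : T - t₁ ≤ shortTime n * ρ ^ 2)
    (hlρ : 4 * (1 + Λ) * gradientConst n * (2 * l) ≤ ρ ^ 2) :
    ∀ p ∈ parabolicCylinder (t₁ + 4 * l) T a₀ (11 / 8 * ρ),
      gradSq u p ≤ 8 * gradientConst n * ((p.1 - t₁) / ρ ^ 2) := by
  have hl := h.waitingTime_pos
  have hdecay := gradSq_le_elapsedTime_on_parabolicCylinder (l := 2 * l) (r := 11 / 8 * ρ) hρ
    (by positivity) (hT.trans (mul_le_of_le_one_left (sq_nonneg ρ) (shortTime_lt_one n).le))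
    (by linarith) (h.isGraphicalMCFAt_of_le (by linarith) (by linarith))
    (h.one_add_gradSq_le_eight hρ hT hlρ)
    (fun p hp => h.abs_le_elapsedTime hρ p
      (parabolicCylinder_subset (by linarith) le_rfl (by simp; linarith) hp))
  rwa [← mul_assoc, show (2 * 2 : ℝ) = 4 by norm_num] at hdecay

theorem hessSq_le_elapsedTime (h : IsSlabFlow u a₀ ρ t₁ s T l Λ) (hρ : 0 < ρ)
    (hT : T - t₁ ≤ shortTime n * ρ ^ 2)
    (hlρ : 4 * (1 + Λ) * gradientConst n * (2 * l) ≤ ρ ^ 2)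
    (hsmall : 8 * gradientConst n * (T - t₁) ≤ smallGradSq n * ρ ^ 2) :
    ∀ p ∈ parabolicCylinder (t₁ + 8 * l) T a₀ ρ, hessSq u p ≤ hessianConst n / (p.1 - t₁) := by
  have hl := h.waitingTime_pos
  have hC := gradientConst_pos n
  have hhess := hessSq_le_on_parabolicCylinder (l := 4 * l) (r := ρ)
    (r' := 11 / 8 * ρ) hρ (by positivity)
    (hT.trans (mul_le_of_le_one_left (sq_nonneg ρ) (shortTime_lt_one n).le)) (by linarith)
    (h.isGraphicalMCFAt_of_le (by linarith) (by linarith)) fun p hp => ?_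
  · rwa [← mul_assoc, show (2 * 4 : ℝ) = 8 by norm_num] at hhess
  · refine (h.gradSq_le_elapsedTime hρ hT hlρ p hp).trans ?_
    rw [← mul_div_assoc, div_le_iff₀ (by positivity)]
    refine le_trans ?_ hsmall
    gcongr
    exact hp.1.2

end IsSlabFlow

end InteriorDecay

section SpaceTimeForm

variable {n : ℕ} {u : SpaceTime n → ℝ} {t : ℝ} {x : EuclideanSpace ℝ (Fin n)}

theorem deriv_slice (hu : DifferentiableAt ℝ u (t, x)) :
    deriv (fun τ => u (τ, x)) t = ∂ₜ u (t, x) := by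
  have h := HasFDerivAt.comp (f := (·, x)) t hu.hasFDerivAt (hasFDerivAt_prodMk_left t x)
  rw [← fderiv_apply_one_eq_deriv]
  exact DFunLike.congr_fun h.fderiv 1

theorem pd_slice (hu : DifferentiableAt ℝ u (t, x)) (i : Fin n) :
    pd (fun y => u (t, y)) x i = ∂[i] u (t, x) := by
  have h := hu.hasFDerivAt.comp x (hasFDerivAt_prodMk_right t x)
  exact DFunLike.congr_fun h.fderiv (EuclideanSpace.single i 1)

theorem pd2_slice (hu : ContDiffAt ℝ ∞ u (t, x)) (i j : Fin n) :
    pd2 (fun y => u (t, y)) x i j = ∂[i] (∂[j] u) (t, x) := by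
  have hpd : (fun y => pd (fun z => u (t, z)) y j) =ᶠ[𝓝 x] fun y => ∂[j] u (t, y) := by
    have hdiff : ∀ᶠ p in 𝓝 (t, x), ContDiffAt ℝ 1 u p :=
      (hu.of_le (by exact_mod_cast le_top)).eventually (by simp)
    filter_upwards [hdiff.curry_nhds.self_of_nhds] with y hy
    exact pd_slice (hy.differentiableAt one_ne_zero) j
  rw [pd2, hpd.fderiv_eq]
  exact pd_slice (differentiableAt_of_contDiffAt_infty (by fun_prop)) i

theorem gradNormSq_slice (hu : DifferentiableAt ℝ u (t, x)) :
    gradNormSq (fun y => u (t, y)) x = gradSq u (t, x) :=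
  Finset.sum_congr rfl fun i _ => by rw [pd_slice hu i]

theorem hessNorm_slice (hu : ContDiffAt ℝ ∞ u (t, x)) :
    hessNorm (fun y => u (t, y)) x = √(hessSq u (t, x)) := by
  simp only [hessNorm, hessSq, Fintype.sum_prod_type, pd2_slice hu]

theorem mcfRHS_slice (hu : ContDiffAt ℝ ∞ u (t, x)) :
    mcfRHS (fun y => u (t, y)) x =
      parabolicOp (mcfCoeff u (t, x)) u (t, x) + ∂ₜ u (t, x) := by
  have hdiff := differentiableAt_of_contDiffAt_infty hu
  simp only [mcfRHS, pd2_slice hu, pd_slice hdiff, gradNormSq_slice hdiff, parabolicOp_eq_sum,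
    mcfCoeff_apply, Matrix.one_apply, normalCoeff, invAreaSq, sub_add_cancel]
  refine Finset.sum_congr rfl fun i _ => Finset.sum_congr rfl fun j _ => ?_
  rw [dirDeriv_comm hu]
  ring

end SpaceTimeForm

theorem eventually_nhdsGT_forall_lt {X : Type*} [TopologicalSpace X] {φ : ℝ × X → ℝ}
    {K U : Set X} {A t₁ t₂ : ℝ} (hφ : ContinuousOn φ (Ico t₁ t₂ ×ˢ U)) (ht : t₁ < t₂)
    (hK : IsCompact K) (hKU : K ⊆ U) (hA : ∀ x ∈ K, φ (t₁, x) < A) :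
    ∀ᶠ t in 𝓝[>] t₁, ∀ x ∈ K, φ (t, x) < A := by
  have hnear : ∀ᶠ t in 𝓝 t₁, ∀ x ∈ K, (t, x) ∈ Ico t₁ t₂ ×ˢ U → φ (t, x) < A :=
    hK.eventually_forall_of_forall_eventually fun x hx => eventually_nhdsWithin_iff.1
      ((hφ (t₁, x) ⟨left_mem_Ico.2 ht, hKU hx⟩).eventually_lt_const (hA x hx))
  filter_upwards [nhdsWithin_le_nhds hnear, Ioo_mem_nhdsGT ht] with t htA ht x hx
  exact htA x hx ⟨Ioo_subset_Ico_self ht, hKU hx⟩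

section Flow

variable {n : ℕ} {I : Set ℝ} {U : Set (EuclideanSpace ℝ (Fin n))}
  {f : ℝ → EuclideanSpace ℝ (Fin n) → ℝ}

theorem IsGMCF.isGraphicalMCFAt (hf : IsGMCF I U f) {p : SpaceTime n} (hI : I ∈ 𝓝 p.1)
    (hU : U ∈ 𝓝 p.2) : IsGraphicalMCFAt (fun q => f q.1 q.2) p := by
  filter_upwards [eventually_mem_nhds_iff.2 (prod_mem_nhds hI hU)] with ⟨t, x⟩ htx
  have hsmooth := hf.1.contDiffAt htx
  have hmem := mem_of_mem_nhds htx
  refine ⟨hsmooth, ?_⟩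
  have hflow := hf.2 t hmem.1 x hmem.2
  have hderiv := deriv_slice (differentiableAt_of_contDiffAt_infty hsmooth)
  have hrhs := mcfRHS_slice hsmooth
  simp only at hderiv hrhs
  linarith

theorem continuousOn_gradNormSq
    (hf : ContDiffOn ℝ ∞ (fun p : SpaceTime n => f p.1 p.2) (I ×ˢ U)) (hI : UniqueDiffOn ℝ I)
    (hU : IsOpen U) : ContinuousOn (fun p : SpaceTime n => gradNormSq (f p.1) p.2) (I ×ˢ U) := by
  set F : SpaceTime n → ℝ := fun p => f p.1 p.2
  have hF' : ContinuousOn (fderivWithin ℝ F (I ×ˢ U)) (I ×ˢ U) :=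
    hf.continuousOn_fderivWithin (hI.prod hU.uniqueDiffOn) (by simp)
  have hpd : ∀ p ∈ I ×ˢ U, ∀ i,
      pd (f p.1) p.2 i = fderivWithin ℝ F (I ×ˢ U) p (spaceUnit i) := by
    rintro ⟨t, x⟩ hp i
    have hslice := (hf.differentiableOn (by simp) (t, x) hp).hasFDerivWithinAt.comp x
      (hasFDerivAt_prodMk_right t x).hasFDerivWithinAt (fun y (hy : y ∈ U) => ⟨hp.1, hy⟩)
    exact DFunLike.congr_fun (hslice.hasFDerivAt (hU.mem_nhds hp.2)).fderiv
      (EuclideanSpace.single i 1)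
  have hsum : ContinuousOn (fun p => ∑ i, fderivWithin ℝ F (I ×ˢ U) p (spaceUnit i) ^ 2)
      (I ×ˢ U) := continuousOn_finsetSum _ fun i _ => (hF'.clm_apply continuousOn_const).pow 2
  exact hsum.congr fun p hp => Finset.sum_congr rfl fun i _ => by rw [hpd p hp i]

theorem pd_sub_const (g : EuclideanSpace ℝ (Fin n) → ℝ) (c : ℝ) :
    pd (fun y => g y - c) = pd g := by
  funext x i
  rw [pd, fderiv_sub_const, pd]

theorem gradNorm_sub_const (g : EuclideanSpace ℝ (Fin n) → ℝ) (c : ℝ) :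
    gradNorm (fun y => g y - c) = gradNorm g := by
  funext x
  simp only [gradNorm, gradNormSq, pd_sub_const]

theorem hessNorm_sub_const (g : EuclideanSpace ℝ (Fin n) → ℝ) (c : ℝ) :
    hessNorm (fun y => g y - c) = hessNorm g := by
  funext x
  simp only [hessNorm, pd2, pd_sub_const]

theorem IsGMCF.sub_const (hf : IsGMCF I U f) (c : ℝ) : IsGMCF I U (fun t x => f t x - c) := by
  refine ⟨hf.1.sub contDiffOn_const, fun t ht x hx => ?_⟩
  rw [deriv_sub_const, hf.2 t ht x hx]
  simp only [mcfRHS, gradNormSq, pd2, pd_sub_const]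

variable {a₀ x : EuclideanSpace ℝ (Fin n)} {ρ t₁ t₂ T t l L : ℝ}

theorem IsGMCF.exists_isSlabFlow (hf : IsGMCF (Ico t₁ t₂) (ball a₀ (2 * ρ)) f) (hρ : 0 < ρ)
    (hl : 0 < l) (ht : t₁ < t₂) (hT : T < t₂)
    (hb : ∀ t ∈ Ico t₁ t₂, ∀ x ∈ ball a₀ (2 * ρ), |f t x| < 2 * ρ)
    (hi : ∀ x ∈ ball a₀ (2 * ρ), |f t₁ x| ≤ l / ρ)
    (hg : ∀ x ∈ ball a₀ (2 * ρ), gradNorm (f t₁) x ≤ L) :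
    ∃ s, IsSlabFlow (fun p => f p.1 p.2) a₀ ρ t₁ s T l (L ^ 2 + 1) := by
  have hsub : closedBall a₀ (15 / 8 * ρ) ⊆ ball a₀ (2 * ρ) :=
    closedBall_subset_ball (by linarith)
  have hcompact := isCompact_closedBall a₀ (15 / 8 * ρ)
  have hheight := eventually_nhdsGT_forall_lt (A := 2 * l / ρ) hf.1.continuousOn.abs ht hcompact
    hsub fun x hx => (hi x (hsub hx)).trans_lt (by gcongr; linarith)
  have hgrad := eventually_nhdsGT_forall_lt (A := L ^ 2 + 1)
    (continuousOn_gradNormSq hf.1 (uniqueDiffOn_Ico t₁ t₂) isOpen_ball) ht hcompact hsub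
    fun x hx => (Real.sqrt_le_iff.1 (hg x (hsub hx))).2.trans_lt (lt_add_one _)
  have hsoon : ∀ᶠ s in 𝓝[>] t₁, s ∈ Ioo t₁ (min t₂ (t₁ + l)) :=
    Ioo_mem_nhdsGT (lt_min ht (lt_add_of_pos_right t₁ hl))
  obtain ⟨s, ⟨hs, hsmin⟩, hsH, hsG⟩ := (hsoon.and (hheight.and hgrad)).exists
  have hflow (t) (ht : t ∈ Ioo t₁ t₂) (x) (hx : x ∈ closedBall a₀ (15 / 8 * ρ)) :
      IsGraphicalMCFAt (fun q => f q.1 q.2) (t, x) :=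
    hf.isGraphicalMCFAt (Ico_mem_nhds ht.1 ht.2) (isOpen_ball.mem_nhds (hsub hx))
  refine ⟨s, hs, (hsmin.trans_le (min_le_right _ _)).le,
    fun p hp => hflow p.1 ⟨hs.trans_le hp.1.1, hp.1.2.trans_lt hT⟩ p.2 hp.2,
    fun p hp => (hb p.1 ⟨(hs.trans_le hp.1.1).le, hp.1.2.trans_lt hT⟩ p.2 (hsub hp.2)).le,
    fun x hx => (hsH x hx).le, fun x hx => ?_⟩
  rw [← gradNormSq_slice (differentiableAt_of_contDiffAt_infty
    (hflow s ⟨hs, hsmin.trans_le (min_le_left _ _)⟩ x hx).contDiffAt)]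
  exact (hsG x hx).le

/-- The time, in units of `ρ²`, up to which the final estimates hold. -/
noncomputable def interiorTime (n : ℕ) : ℝ :=
  min (shortTime n) (smallGradSq n / (8 * gradientConst n))

theorem interiorTime_pos (n : ℕ) : 0 < interiorTime n :=
  lt_min (shortTime_pos n)
    (div_pos (smallGradSq_pos n) (mul_pos (by norm_num) (gradientConst_pos n)))

theorem interiorTime_lt_one (n : ℕ) : interiorTime n < 1 :=
  (min_le_left _ _).trans_lt (shortTime_lt_one n)

theorem gradientConst_mul_interiorTime_le (n : ℕ) :
    8 * gradientConst n * interiorTime n ≤ smallGradSq n :=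
  (le_div_iff₀' (mul_pos (by norm_num) (gradientConst_pos n))).1 (min_le_right _ _)

theorem IsGMCF.interior_estimates (hf : IsGMCF (Ico t₁ t₂) (ball a₀ (2 * ρ)) f) (hρ : 0 < ρ)
    (hl : 0 < l) (hlρ : 4 * (1 + (L ^ 2 + 1)) * gradientConst n * (2 * l) ≤ ρ ^ 2)
    (hb : ∀ t ∈ Ico t₁ t₂, ∀ x ∈ ball a₀ (2 * ρ), |f t x| < 2 * ρ)
    (hi : ∀ x ∈ ball a₀ (2 * ρ), |f t₁ x| ≤ l / ρ)
    (hg : ∀ x ∈ ball a₀ (2 * ρ), gradNorm (f t₁) x ≤ L)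
    (ht₁ : t₁ + 8 * l ≤ t) (htρ : t - t₁ ≤ interiorTime n * ρ ^ 2) (ht₂ : t < t₂)
    (hx : x ∈ ball a₀ ρ) :
    |f t x| ≤ heightConst n * ((t - t₁) / ρ) ∧
      gradNorm (f t) x ≤ √(8 * gradientConst n * ((t - t₁) / ρ ^ 2)) ∧
      hessNorm (f t) x ≤ √(hessianConst n * (t - t₁)⁻¹) := by
  obtain ⟨s, hs⟩ := hf.exists_isSlabFlow hρ hl (by linarith) ht₂ hb hi hg
  have hmem (k r : ℝ) (hk : k ≤ 8 * l) (hr : ρ ≤ r) : (t, x) ∈ parabolicCylinder (t₁ + k) t a₀ r :=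
    ⟨⟨by linarith, le_rfl⟩, closedBall_subset_closedBall hr (ball_subset_closedBall hx)⟩
  have hshort : t - t₁ ≤ shortTime n * ρ ^ 2 := htρ.trans (by gcongr; exact min_le_left _ _)
  have hsmall : 8 * gradientConst n * (t - t₁) ≤ smallGradSq n * ρ ^ 2 := by
    have := gradientConst_pos n
    calc 8 * gradientConst n * (t - t₁) ≤ 8 * gradientConst n * (interiorTime n * ρ ^ 2) := by
          gcongr
      _ ≤ smallGradSq n * ρ ^ 2 := by
          rw [← mul_assoc]
          gcongr
          exact gradientConst_mul_interiorTime_le n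
  have hsmooth := (hf.isGraphicalMCFAt (p := (t, x)) (Ico_mem_nhds (by linarith) ht₂)
    (isOpen_ball.mem_nhds (ball_subset_ball (by linarith) hx))).contDiffAt
  have hgrad := hs.gradSq_le_elapsedTime hρ hshort hlρ (t, x)
    (hmem (4 * l) _ (by linarith) (by linarith))
  have hhess := hs.hessSq_le_elapsedTime hρ hshort hlρ hsmall (t, x) (hmem (8 * l) _ le_rfl le_rfl)
  rw [← gradNormSq_slice (differentiableAt_of_contDiffAt_infty hsmooth)] at hgrad
  exact ⟨hs.abs_le_elapsedTime hρ (t, x) (hmem l _ (by linarith) (by linarith)),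
    Real.sqrt_le_sqrt hgrad, (hessNorm_slice hsmooth).trans_le (Real.sqrt_le_sqrt hhess)⟩

theorem sqrt_mul_le_mul_rpow_half {c C d : ℝ} (hC : 1 ≤ C) (hcC : c ≤ C) (hd : 0 ≤ d) :
    √(c * d) ≤ C * d ^ (1 / 2 : ℝ) := by
  calc √(c * d) ≤ √(C ^ 2 * d) := by
        gcongr
        exact hcC.trans (le_self_pow₀ hC two_ne_zero)
    _ = C * d ^ (1 / 2 : ℝ) := by
        rw [Real.sqrt_mul (sq_nonneg C), Real.sqrt_sq (zero_le_one.trans hC), Real.sqrt_eq_rpow]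

theorem exists_forall_lt_one_and_sq_le {ε : ℝ} (hε : 0 < ε) :
    ∃ lam₀ ∈ Ioo (0 : ℝ) 1, ∀ lam ∈ Ioc 0 lam₀, lam < 1 ∧ lam ^ 2 ≤ ε := by
  refine ⟨min (1 / 2) ε, ⟨by positivity, (min_le_left _ _).trans_lt (by norm_num)⟩,
    fun lam hlam => ?_⟩
  have hlt : lam < 1 := (hlam.2.trans (min_le_left _ _)).trans_lt (by norm_num)
  exact ⟨hlt, (pow_le_of_le_one hlam.1.le hlt.le two_ne_zero).trans
    (hlam.2.trans (min_le_right _ _))⟩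

/-- The constant of the final estimates. -/
noncomputable def interiorConst (n : ℕ) : ℝ :=
  heightConst n + 8 * gradientConst n + hessianConst n

theorem one_lt_interiorConst (n : ℕ) : 1 < interiorConst n := by
  unfold interiorConst
  linarith [one_lt_heightConst n, gradientConst_pos n, hessianConst_pos n]

theorem IsGMCF.interior_estimates_rpow {a₁ γ : ℝ}
    (hf : IsGMCF (Ico t₁ t₂) (ball a₀ (2 * ρ)) f) (hρ : 0 < ρ) (hγ : γ ≤ 1 / 2)
    (hl : 0 < l) (hlρ : 4 * (1 + (L ^ 2 + 1)) * gradientConst n * (2 * l) ≤ ρ ^ 2)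
    (hb : ∀ t ∈ Ico t₁ t₂, ∀ x ∈ ball a₀ (2 * ρ), |f t x - a₁| < 2 * ρ)
    (hi : ∀ x ∈ ball a₀ (2 * ρ), |f t₁ x - a₁| ≤ l / ρ)
    (hg : ∀ x ∈ ball a₀ (2 * ρ), gradNorm (f t₁) x ≤ L)
    (ht₁ : t₁ + 8 * l ≤ t) (htρ : t - t₁ ≤ interiorTime n * ρ ^ 2) (ht₂ : t < t₂)
    (hx : x ∈ ball a₀ ρ) :
    |f t x - a₁| ≤ interiorConst n * ρ⁻¹ * (t - t₁) ∧
      gradNorm (f t) x ≤ interiorConst n * ((ρ ^ 2)⁻¹ * (t - t₁)) ^ γ ∧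
      hessNorm (f t) x ≤ interiorConst n * (t - t₁) ^ (-(1 : ℝ) / 2) := by
  obtain ⟨hheight, hgrad, hhess⟩ := (hf.sub_const a₁).interior_estimates hρ hl hlρ hb hi
    (by rwa [gradNorm_sub_const]) ht₁ htρ ht₂ hx
  rw [gradNorm_sub_const] at hgrad
  rw [hessNorm_sub_const] at hhess
  have hH := one_lt_heightConst n
  have hG := gradientConst_pos n
  have hB := hessianConst_pos n
  have hC := one_lt_interiorConst n
  have hCdef := interiorConst.eq_1 n
  have hD : 0 < t - t₁ := by linarith
  have hscaled : 0 < (t - t₁) / ρ ^ 2 := by positivity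
  refine ⟨?_, ?_, ?_⟩
  · rw [mul_assoc, inv_mul_eq_div]
    exact hheight.trans (by gcongr; linarith)
  · rw [inv_mul_eq_div]
    refine hgrad.trans ((sqrt_mul_le_mul_rpow_half hC.le (by linarith) hscaled.le).trans ?_)
    have hle_one : (t - t₁) / ρ ^ 2 ≤ 1 := div_le_one_of_le₀
      (htρ.trans (mul_le_of_le_one_left (sq_nonneg ρ) (interiorTime_lt_one n).le)) (sq_nonneg ρ)
    gcongr ?_ * ?_
    exact Real.rpow_le_rpow_of_exponent_ge hscaled hle_one hγ
  · rw [neg_div, Real.rpow_neg hD.le, ← Real.inv_rpow hD.le]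
    exact hhess.trans (sqrt_mul_le_mul_rpow_half hC.le (by linarith) (inv_nonneg.2 hD.le))

end Flow

theorem becominggraphthm_general (n : ℕ) {m : ℕ} (hm : 2 ≤ m) {γ : ℝ} (hγ : γ ≤ 1 / 2) :
    ∃ C σ₀ Λ₀ : ℝ, 1 < C ∧ σ₀ ∈ Set.Ioo (0 : ℝ) 1 ∧ 1 < Λ₀ ∧
      ∀ L : ℝ, ∃ lam₀ ∈ Set.Ioo (0 : ℝ) 1,
      ∀ lam ∈ Set.Ioc (0 : ℝ) lam₀, ∀ ρ : ℝ, 0 < ρ → ∀ t₁ t₂ : ℝ,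
        ∀ (a₀ : EuclideanSpace ℝ (Fin n)) (a₁ : ℝ)
          (f : ℝ → EuclideanSpace ℝ (Fin n) → ℝ),
          IsGMCF (Set.Ico t₁ t₂) (Metric.ball a₀ (2 * ρ)) f →
          (∀ t ∈ Set.Ico t₁ t₂, ∀ x ∈ Metric.ball a₀ (2 * ρ), |f t x - a₁| < 2 * ρ) →
          (∀ x ∈ Metric.ball a₀ (2 * ρ), |f t₁ x - a₁| ≤ lam ^ m * ρ) →
          (∀ x ∈ Metric.ball a₀ (2 * ρ), gradNorm (f t₁) x ≤ L) →
          ∀ t : ℝ, t₁ + Λ₀ * lam ^ 2 * ρ ^ 2 ≤ t →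
            t < t₁ + Λ₀ * lam ^ 2 * ρ ^ 2 + σ₀ * ρ ^ 2 → t < t₂ →
          ∀ x ∈ Metric.ball a₀ ρ,
            |f t x - a₁| ≤ C * ρ⁻¹ * (t - t₁) ∧
            gradNorm (f t) x ≤ C * ((ρ ^ 2)⁻¹ * (t - t₁)) ^ γ ∧
            hessNorm (f t) x ≤ C * (t - t₁) ^ (-(1 : ℝ) / 2) := by
  have hG := gradientConst_pos n
  have hσ := interiorTime_pos n
  refine ⟨interiorConst n, interiorTime n / 2, 8, one_lt_interiorConst n,
    ⟨by positivity, by linarith [interiorTime_lt_one n]⟩, by norm_num, fun L => ?_⟩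
  obtain ⟨lam₀, hlam₀, hsq⟩ := exists_forall_lt_one_and_sq_le
    (lt_min (by positivity : 0 < interiorTime n / 16)
      (by positivity : 0 < 1 / (8 * (1 + (L ^ 2 + 1)) * gradientConst n)))
  refine ⟨lam₀, hlam₀, fun lam hlam ρ hρ t₁ t₂ a₀ a₁ f hf hb hi hg t ht₁ htσ ht₂ x hx => ?_⟩
  obtain ⟨hlam_lt_one, hlam_sq⟩ := hsq lam hlam
  obtain ⟨hlamσ, hlamG⟩ := le_min_iff.1 hlam_sq
  have hρ_sq : 0 < ρ ^ 2 := by positivity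
  have htime := mul_le_mul_of_nonneg_right hlamσ hρ_sq.le
  have hgradient := mul_le_mul_of_nonneg_right ((le_div_iff₀ (by positivity)).1 hlamG) hρ_sq.le
  refine hf.interior_estimates_rpow hρ hγ (l := lam ^ 2 * ρ ^ 2) (mul_pos (pow_pos hlam.1 2) hρ_sq)
    (by linarith) hb (fun y hy => (hi y hy).trans ?_) hg (by linarith) (by linarith) ht₂ hx
  calc lam ^ m * ρ ≤ lam ^ 2 * ρ :=
        mul_le_mul_of_nonneg_right (pow_le_pow_of_le_one hlam.1.le hlam_lt_one.le hm) hρ.le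
    _ = lam ^ 2 * ρ ^ 2 / ρ := by field_simp

/-- **Interior smoothing estimates** (graphical case `E = ∅` of Theorem `becominggraphthm`).
There are `C > 1`, `σ₀ ∈ (0,1)` (depending only on `n`) and, for every `L ≥ 1`, constants
`Λ₀ > 1`, `λ₀ ∈ (0,1)` such that: if `f` is a graphical mean curvature flow on
`[t₁,t₂) × Bⁿ(â,2ρ)` with `|f − ã| < 2ρ`, `sup |f(t₁,·) − ã| ≤ λ^{2n}ρ` and
`sup |Df(t₁,·)| ≤ L` for some `λ ∈ (0,λ₀]`, then with `t₀ = t₁ + Λ₀λ²ρ²` (assumed `< t₂`)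
one has for all `t ∈ [t₀, t₀+σ₀ρ²)` with `t < t₂` and all `x ∈ Bⁿ(â,ρ)`:
`|f(t,x) − ã| ≤ Cρ⁻¹(t−t₁)`, `|Df(t,x)| ≤ C(ρ⁻²(t−t₁))^{1/4}` and
`|D²f(t,x)| ≤ C(t−t₁)^{−1/2}`. -/
theorem becominggraphthm (n : ℕ) (hn : 1 ≤ n) :
    ∃ C σ₀ : ℝ, 1 < C ∧ σ₀ ∈ Set.Ioo (0 : ℝ) 1 ∧
      ∀ L : ℝ, 1 ≤ L →
      ∃ Λ₀ lam₀ : ℝ, 1 < Λ₀ ∧ lam₀ ∈ Set.Ioo (0 : ℝ) 1 ∧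
      ∀ lam ∈ Set.Ioc (0 : ℝ) lam₀, ∀ ρ : ℝ, 0 < ρ → ∀ t₁ t₂ : ℝ,
        t₁ + Λ₀ * lam ^ 2 * ρ ^ 2 < t₂ →
        ∀ (a₀ : EuclideanSpace ℝ (Fin n)) (a₁ : ℝ)
          (f : ℝ → EuclideanSpace ℝ (Fin n) → ℝ),
          IsGMCF (Set.Ico t₁ t₂) (Metric.ball a₀ (2 * ρ)) f →
          (∀ t ∈ Set.Ico t₁ t₂, ∀ x ∈ Metric.ball a₀ (2 * ρ), |f t x - a₁| < 2 * ρ) →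
          (∀ x ∈ Metric.ball a₀ (2 * ρ), |f t₁ x - a₁| ≤ lam ^ (2 * n) * ρ) →
          (∀ x ∈ Metric.ball a₀ (2 * ρ), gradNorm (f t₁) x ≤ L) →
          ∀ t : ℝ, t₁ + Λ₀ * lam ^ 2 * ρ ^ 2 ≤ t →
            t < t₁ + Λ₀ * lam ^ 2 * ρ ^ 2 + σ₀ * ρ ^ 2 → t < t₂ →
          ∀ x ∈ Metric.ball a₀ ρ,
            |f t x - a₁| ≤ C * ρ⁻¹ * (t - t₁) ∧
            gradNorm (f t) x ≤ C * ((ρ ^ 2)⁻¹ * (t - t₁)) ^ ((1 : ℝ) / 4) ∧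
            hessNorm (f t) x ≤ C * (t - t₁) ^ (-(1 : ℝ) / 2) := by
  obtain ⟨C, σ₀, Λ₀, hC, hσ₀, hΛ₀, h⟩ :=
    becominggraphthm_general n (m := 2 * n) (by omega) (γ := 1 / 4) (by norm_num)
  exact ⟨C, σ₀, hC, hσ₀, fun L _ => let ⟨lam₀, hlam₀, hL⟩ := h L
    ⟨Λ₀, lam₀, hΛ₀, hlam₀, fun lam hlam ρ hρ t₁ t₂ _ => hL lam hlam ρ hρ t₁ t₂⟩⟩
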